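/- arXiv:1712.08942 — 12 statements merged into one kernel-verified Lean document; each statement's English description precedes it below -/
import Mathlib

section
/- Let a_1, …, a_m be positive integers and R := {x ∈ ℤ^m : |x_i| ≤ a_i for all i}. Suppose C : R → [0,∞) satisfies, for arguments in R: (i) C is even and C(x) = 0 iff x = 0; (ii) C(x) ≤ C(y) whenever x ⪯ y; (iii) C(x+y) ≤ C(x) + C(y) whenever x, y, x+y ∈ R. Then the function C̄ : ℤ^m → [0,∞) defined by C̄(x) := max{C(y) : y ∈ R, y ⪯ x} coincides with C on R and satisfies (i), (ii), (iii) on all of ℤ^m. -/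
/-- The partial order `x ⪯ y` on integer vectors: `|x j| ≤ |y j|` and `x j * y j ≥ 0`
for every coordinate `j`. -/
def PreOrdInt {ι : Type*} (x y : ι → ℤ) : Prop :=
  ∀ j, |x j| ≤ |y j| ∧ 0 ≤ x j * y j

def P1 (x y : ℤ) : Prop := |x| ≤ |y| ∧ 0 ≤ x * y

theorem P1_iff (x y : ℤ) : P1 x y ↔ (0 ≤ x ∧ x ≤ y) ∨ (x ≤ 0 ∧ y ≤ x) := by
  unfold P1
  constructor
  · rintro ⟨h1, h2⟩
    rcases lt_trichotomy x 0 with hx | hx | hx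
    · have : y ≤ 0 := by
        by_contra hy
        push Not at hy
        nlinarith
      rw [abs_of_neg hx, abs_of_nonpos this] at h1
      omega
    · omega
    · have : 0 ≤ y := by
        by_contra hy
        push Not at hy
        nlinarith
      rw [abs_of_pos hx, abs_of_nonneg this] at h1
      omega
  · rintro (⟨h1, h2⟩ | ⟨h1, h2⟩)
    · rw [abs_of_nonneg h1, abs_of_nonneg (h1.trans h2)]
      exact ⟨h2, mul_nonneg h1 (h1.trans h2)⟩
    · rw [abs_of_nonpos h1, abs_of_nonpos (h2.trans h1)]
      exact ⟨by omega, mul_nonneg_of_nonpos_of_nonpos h1 (h2.trans h1)⟩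

theorem pre_iff {ι : Type*} (x y : ι → ℤ) :
    PreOrdInt x y ↔ ∀ j, (0 ≤ x j ∧ x j ≤ y j) ∨ (x j ≤ 0 ∧ y j ≤ x j) :=
  forall_congr' fun j => P1_iff (x j) (y j)

theorem split1 (x y z : ℤ) (h : (0 ≤ z ∧ z ≤ x + y) ∨ (z ≤ 0 ∧ x + y ≤ z)) :
    ∃ u : ℤ, ((0 ≤ u ∧ u ≤ x) ∨ (u ≤ 0 ∧ x ≤ u)) ∧
      ((0 ≤ z - u ∧ z - u ≤ y) ∨ (z - u ≤ 0 ∧ y ≤ z - u)) ∧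
      |u| ≤ |z| ∧ |z - u| ≤ |z| := by
  rcases h with h | h
  · refine ⟨max 0 (min x z), ?_, ?_, ?_, ?_⟩
    · omega
    · omega
    · rw [abs_le, abs_of_nonneg h.1]; omega
    · rw [abs_le, abs_of_nonneg h.1]; omega
  · refine ⟨min 0 (max x z), ?_, ?_, ?_, ?_⟩
    · omega
    · omega
    · rw [abs_le, abs_of_nonpos h.1]; omega
    · rw [abs_le, abs_of_nonpos h.1]; omega

/-- Extension of a multi-material cost from a rectangle
`R = [-a_1,a_1] × ⋯ × [-a_m,a_m] ⊆ ℤ^m` to all of `ℤ^m`: if `C` satisfies the cost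
axioms (i) even and vanishing exactly at `0`, (ii) monotone with respect to `⪯`,
(iii) subadditive, with all arguments restricted to `R`, then the function
`C̄(x) := max {C(y) : y ∈ R, y ⪯ x}` coincides with `C` on `R` and satisfies
(i), (ii), (iii) on all of `ℤ^m`. -/
theorem cost_extension_subadditive {m : ℕ} (a : Fin m → ℤ) (ha : ∀ i, 0 < a i)
    (R : Set (Fin m → ℤ)) (hR : R = {x | ∀ i, |x i| ≤ a i})
    (C : (Fin m → ℤ) → ℝ)
    (hC0 : ∀ x ∈ R, 0 ≤ C x)
    (heven : ∀ x ∈ R, C (-x) = C x)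
    (hzero : ∀ x ∈ R, (C x = 0 ↔ x = 0))
    (hmono : ∀ x ∈ R, ∀ y ∈ R, PreOrdInt x y → C x ≤ C y)
    (hsub : ∀ x ∈ R, ∀ y ∈ R, x + y ∈ R → C (x + y) ≤ C x + C y)
    (Cbar : (Fin m → ℤ) → ℝ)
    (hCbar : ∀ x, IsGreatest {c | ∃ y ∈ R, PreOrdInt y x ∧ C y = c} (Cbar x)) :
    (∀ x ∈ R, Cbar x = C x) ∧
    (∀ x, 0 ≤ Cbar x) ∧
    (∀ x, Cbar (-x) = Cbar x) ∧
    (∀ x, Cbar x = 0 ↔ x = 0) ∧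
    (∀ x y, PreOrdInt x y → Cbar x ≤ Cbar y) ∧
    (∀ x y, Cbar (x + y) ≤ Cbar x + Cbar y) := by
  have hmem : ∀ x, x ∈ R ↔ ∀ i, |x i| ≤ a i := by intro x; rw [hR]; rfl
  have hneg : ∀ x ∈ R, -x ∈ R := by
    intro x hx
    rw [hmem] at hx ⊢
    intro i
    simpa using hx i
  have hle : ∀ x, ∀ y ∈ R, PreOrdInt y x → C y ≤ Cbar x :=
    fun x y hy h => (hCbar x).2 ⟨y, hy, h, rfl⟩
  have hrefl : ∀ x : Fin m → ℤ, PreOrdInt x x := by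
    intro x; rw [pre_iff]; intro j; omega
  have hnegp : ∀ x y : Fin m → ℤ, PreOrdInt x y → PreOrdInt (-x) (-y) := by
    intro x y h; rw [pre_iff] at h ⊢; intro j
    have := h j
    simp only [Pi.neg_apply]
    omega
  have htrans : ∀ x y z : Fin m → ℤ, PreOrdInt x y → PreOrdInt y z → PreOrdInt x z := by
    intro x y z h1 h2; rw [pre_iff] at h1 h2 ⊢; intro j
    have := h1 j
    have := h2 j
    omega
  have hz : ∀ y : Fin m → ℤ, PreOrdInt y 0 → y = 0 := by
    intro y h; rw [pre_iff] at h; funext j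
    have := h j
    simp only [Pi.zero_apply] at this ⊢
    omega
  have heq : ∀ x ∈ R, Cbar x = C x := by
    intro x hx
    apply le_antisymm
    · obtain ⟨y, hy, hyx, e⟩ := (hCbar x).1
      rw [← e]
      exact hmono y hy x hx hyx
    · exact hle x x hx (hrefl x)
  have hnn : ∀ x, 0 ≤ Cbar x := by
    intro x
    obtain ⟨y, hy, hyx, e⟩ := (hCbar x).1
    rw [← e]
    exact hC0 y hy
  have hnle : ∀ x, Cbar (-x) ≤ Cbar x := by
    intro x
    obtain ⟨y, hy, hyx, e⟩ := (hCbar (-x)).1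
    rw [← e, ← heven y hy]
    apply hle x _ (hneg y hy)
    simpa using hnegp _ _ hyx
  refine ⟨heq, hnn, ?_, ?_, ?_, ?_⟩
  · intro x
    apply le_antisymm (hnle x)
    simpa using hnle (-x)
  · intro x
    constructor
    · intro h
      have hyR : (fun i => max (-a i) (min (a i) (x i))) ∈ R := by
        rw [hmem]; intro i
        have := ha i
        rw [abs_le]
        omega
      have hyx : PreOrdInt (fun i => max (-a i) (min (a i) (x i))) x := by
        rw [pre_iff]; intro i
        have := ha i
        omega
      have h0 := (hzero _ hyR).1 (le_antisymm (h ▸ hle x _ hyR hyx) (hC0 _ hyR))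
      funext i
      have h1 := congrFun h0 i
      have := ha i
      simp only [Pi.zero_apply] at h1 ⊢
      omega
    · rintro rfl
      obtain ⟨y, hy, hyx, e⟩ := (hCbar 0).1
      rw [← e]
      exact (hzero y hy).2 (hz y hyx)
  · intro x y hxy
    obtain ⟨z, hzR, hzx, e⟩ := (hCbar x).1
    rw [← e]
    exact hle y z hzR (htrans _ _ _ hzx hxy)
  · intro x y
    obtain ⟨z, hzR, hzx, e⟩ := (hCbar (x + y)).1
    rw [← e]
    rw [pre_iff] at hzx
    choose u h1 h2 h3 h4 using fun j => split1 (x j) (y j) (z j) (hzx j)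
    have huR : u ∈ R := (hmem u).2 fun i => (h3 i).trans ((hmem z).1 hzR i)
    have hvR : z - u ∈ R := (hmem _).2 fun i => (h4 i).trans ((hmem z).1 hzR i)
    have hs := hsub u huR (z - u) hvR (by simpa using hzR)
    rw [add_sub_cancel] at hs
    have ha1 := hle x u huR ((pre_iff _ _).2 h1)
    have ha2 := hle y (z - u) hvR ((pre_iff _ _).2 h2)
    linarith
end

section
/- Let m ≥ 1 and let C : ℤ^m → [0,∞) satisfy: (i) C is even and C(x) = 0 iff x = 0; (ii) C(x) ≤ C(y) whenever x ⪯ y; (iii') there exists a monotone norm ∥·∥⋆ on ℝ^m such that C(x)/∥x∥⋆ ≤ C(x')/∥x'∥⋆ for all nonzero x', x ∈ ℤ^m with x' ⪯ x. Then for all positive integers N_1, …, N_m with N := N_1 + … + N_m, there exists a monotone norm ∥·∥ on ℝ^N satisfying the compatibility equation for C. -/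
/-- `f` is a norm on the real vector space `E`. -/
def IsNorm {E : Type*} [AddCommGroup E] [Module ℝ E] (f : E → ℝ) : Prop :=
  (∀ x, 0 ≤ f x) ∧ (∀ x, f x = 0 ↔ x = 0) ∧
    (∀ x y, f (x + y) ≤ f x + f y) ∧ ∀ (c : ℝ) (x : E), f (c • x) = |c| * f x

/-- The partial order `x ⪯ y` on real vectors. -/
def PreOrd {ι : Type*} (x y : ι → ℝ) : Prop :=
  ∀ j, |x j| ≤ |y j| ∧ 0 ≤ x j * y j

/-- The compatibility equation between a multi-material cost `C : ℤ^m → ℝ` and a norm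
`nrm` on `ℝ^N`, where `N = N_1 + ⋯ + N_m` and `{1, …, N}` is partitioned into blocks
`B_1, …, B_m` of sizes `N_1, …, N_m` (realized here as the sigma type
`Σ i, Fin (N i)`): for every `θ ∈ ℤ^m` with `|θ_i| ≤ N_i` and every choice of subsets
`K_i ⊆ B_i` with `#K_i = |θ_i|`, one has
`C θ = ∥∑_{i=1}^m sign(θ_i) ∑_{j ∈ K_i} e_j∥`. -/
def CompatEq (m : ℕ) (N : Fin m → ℕ) (C : (Fin m → ℤ) → ℝ)
    (nrm : ((Σ i : Fin m, Fin (N i)) → ℝ) → ℝ) : Prop :=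
  ∀ θ : Fin m → ℤ, (∀ i, (θ i).natAbs ≤ N i) →
    ∀ K : (i : Fin m) → Finset (Fin (N i)), (∀ i, (K i).card = (θ i).natAbs) →
      C θ = nrm fun j => ((θ j.1).sign : ℝ) * (if j.2 ∈ K j.1 then 1 else 0)

/-- The auxiliary vector in `ℝ^m` -/
noncomputable def auxS {m : ℕ} {N : Fin m → ℕ} (σ : Fin m → ℤˣ)
    (K : (i : Fin m) → Finset (Fin (N i))) (x : (Σ i : Fin m, Fin (N i)) → ℝ) : Fin m → ℝ :=
  fun i => ((σ i : ℤ) : ℝ) * ∑ j ∈ K i, max 0 (((σ i : ℤ) : ℝ) * x ⟨i, j⟩)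

/-- The auxiliary integer vector -/
def auxT {m : ℕ} {N : Fin m → ℕ} (σ : Fin m → ℤˣ)
    (K : (i : Fin m) → Finset (Fin (N i))) : Fin m → ℤ :=
  fun i => (σ i : ℤ) * ((K i).card : ℤ)

/-- The auxiliary sublinear functional -/
noncomputable def auxF {m : ℕ} {N : Fin m → ℕ} (C : (Fin m → ℤ) → ℝ) (ns : (Fin m → ℝ) → ℝ)
    (σ : Fin m → ℤˣ)
    (K : (i : Fin m) → Finset (Fin (N i))) (x : (Σ i : Fin m, Fin (N i)) → ℝ) : ℝ :=
  C (auxT σ K) / ns (fun i => (auxT σ K i : ℝ)) * ns (auxS σ K x)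

lemma preord_unit (u : ℤˣ) (a b : ℝ) (ha : 0 ≤ a) (hab : a ≤ b) :
    |((u : ℤ) : ℝ) * a| ≤ |((u : ℤ) : ℝ) * b| ∧ 0 ≤ (((u : ℤ) : ℝ) * a) * (((u : ℤ) : ℝ) * b) := by
  have hb := ha.trans hab
  have h := mul_nonneg ha hb
  rcases Int.units_eq_one_or u with rfl | rfl <;>
    simp [abs_of_nonneg ha, abs_of_nonneg hb, hab, h]

lemma preord_unit_int (u : ℤˣ) (a b : ℤ) (ha : 0 ≤ a) (hab : a ≤ b) :
    |(u : ℤ) * a| ≤ |(u : ℤ) * b| ∧ 0 ≤ ((u : ℤ) * a) * ((u : ℤ) * b) := by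
  have hb := ha.trans hab
  have h := mul_nonneg ha hb
  rcases Int.units_eq_one_or u with rfl | rfl <;>
    simp [abs_of_nonneg ha, abs_of_nonneg hb, hab, h]

lemma auxS_mono {m : ℕ} {N : Fin m → ℕ} (σ : Fin m → ℤˣ)
    (K : (i : Fin m) → Finset (Fin (N i))) (x y : (Σ i : Fin m, Fin (N i)) → ℝ)
    (h : PreOrd x y) : PreOrd (auxS σ K x) (auxS σ K y) := by
  intro i
  apply preord_unit
  · exact Finset.sum_nonneg fun j _ => le_max_left _ _
  · apply Finset.sum_le_sum
    intro j _
    obtain ⟨h1, h2⟩ := h ⟨i, j⟩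
    apply max_le (le_max_left _ _)
    generalize x ⟨i, j⟩ = a at *
    generalize y ⟨i, j⟩ = b at *
    rcases Int.units_eq_one_or (σ i) with hu | hu <;> rw [hu] <;> simp
    · by_cases ha : a ≤ 0
      · exact Or.inl ha
      · right
        push Not at ha
        have hb : 0 ≤ b := by
          by_contra hb
          push Not at hb
          nlinarith
        rwa [abs_of_pos ha, abs_of_nonneg hb] at h1
    · by_cases ha : 0 ≤ a
      · exact Or.inl ha
      · right
        push Not at ha
        have hb : b ≤ 0 := by
          by_contra hb
          push Not at hb
          nlinarith
        rw [abs_of_neg ha, abs_of_nonpos hb] at h1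
        linarith

lemma auxS_add {m : ℕ} {N : Fin m → ℕ} (σ : Fin m → ℤˣ)
    (K : (i : Fin m) → Finset (Fin (N i))) (x y : (Σ i : Fin m, Fin (N i)) → ℝ) :
    PreOrd (auxS σ K (x + y)) (auxS σ K x + auxS σ K y) := by
  intro i
  have : (auxS σ K x + auxS σ K y) i = ((σ i : ℤ) : ℝ) *
      ∑ j ∈ K i, (max 0 (((σ i : ℤ) : ℝ) * x ⟨i, j⟩) + max 0 (((σ i : ℤ) : ℝ) * y ⟨i, j⟩)) := by
    simp [auxS, Finset.sum_add_distrib, mul_add]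
  rw [this]
  apply preord_unit
  · exact Finset.sum_nonneg fun j _ => le_max_left _ _
  · apply Finset.sum_le_sum
    intro j _
    apply max_le
    · exact add_nonneg (le_max_left _ _) (le_max_left _ _)
    · rw [Pi.add_apply, mul_add]
      exact add_le_add (le_max_right _ _) (le_max_right _ _)

lemma auxS_smul {m : ℕ} {N : Fin m → ℕ} (σ : Fin m → ℤˣ)
    (K : (i : Fin m) → Finset (Fin (N i))) (x : (Σ i : Fin m, Fin (N i)) → ℝ) (c : ℝ)
    (hc : 0 ≤ c) : auxS σ K (c • x) = c • auxS σ K x := by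
  ext i
  simp only [auxS, Pi.smul_apply, smul_eq_mul, Finset.mul_sum]
  apply Finset.sum_congr rfl
  intro j _
  have : max 0 (((σ i : ℤ) : ℝ) * (c * x ⟨i, j⟩)) = c * max 0 (((σ i : ℤ) : ℝ) * x ⟨i, j⟩) := by
    rw [mul_max_of_nonneg _ _ hc, mul_zero]
    congr 1
    ring
  rw [this]
  ring

lemma auxS_neg {m : ℕ} {N : Fin m → ℕ} (σ : Fin m → ℤˣ)
    (K : (i : Fin m) → Finset (Fin (N i))) (x : (Σ i : Fin m, Fin (N i)) → ℝ) :
    auxS σ K (-x) = - auxS (-σ) K x := by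
  ext i
  simp [auxS]

lemma auxT_neg {m : ℕ} {N : Fin m → ℕ} (σ : Fin m → ℤˣ)
    (K : (i : Fin m) → Finset (Fin (N i))) :
    auxT (-σ) K = - auxT σ K := by
  ext i
  simp [auxT]

/-- If `C : ℤ^m → [0,∞)` satisfies (i) even and vanishing exactly
at `0`, (ii) monotone with respect to `⪯`, and (iii') sublinear with respect to some
monotone norm `∥·∥⋆` on `ℝ^m`, then for all positive integers `N_1, …, N_m` there
exists a monotone norm on `ℝ^N` (`N = N_1 + ⋯ + N_m`) satisfying the compatibility
equation for `C`. -/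
theorem exists_compatible_monotone_norm {m : ℕ} (hm : 1 ≤ m)
    (C : (Fin m → ℤ) → ℝ)
    (hC0 : ∀ x, 0 ≤ C x)
    (heven : ∀ x, C (-x) = C x)
    (hzero : ∀ x, C x = 0 ↔ x = 0)
    (hmono : ∀ x y, PreOrdInt x y → C x ≤ C y)
    (hsublin : ∃ nrmStar : (Fin m → ℝ) → ℝ, IsNorm nrmStar ∧
      (∀ x y : Fin m → ℝ, PreOrd x y → nrmStar x ≤ nrmStar y) ∧
      ∀ x x' : Fin m → ℤ, x ≠ 0 → x' ≠ 0 → PreOrdInt x' x →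
        C x / nrmStar (fun i => (x i : ℝ)) ≤ C x' / nrmStar (fun i => (x' i : ℝ)))
    (N : Fin m → ℕ) (hN : ∀ i, 0 < N i) :
    ∃ nrm : ((Σ i : Fin m, Fin (N i)) → ℝ) → ℝ,
      IsNorm nrm ∧ (∀ x y, PreOrd x y → nrm x ≤ nrm y) ∧ CompatEq m N C nrm := by
  classical
  obtain ⟨ns, ⟨hn0, hnz, hna, hns⟩, hnm, hsub⟩ := hsublin
  have hnneg : ∀ v, ns (-v) = ns v := by
    intro v
    have := hns (-1) v
    simpa using this
  have hF0 : ∀ σ (K : (i : Fin m) → Finset (Fin (N i))) x, 0 ≤ auxF C ns σ K x := by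
    intro σ K x
    exact mul_nonneg (div_nonneg (hC0 _) (hn0 _)) (hn0 _)
  have hFneg : ∀ σ (K : (i : Fin m) → Finset (Fin (N i))) x,
      auxF C ns σ K (-x) = auxF C ns (-σ) K x := by
    intro σ K x
    have h1 : (fun i => (((-auxT σ K) i : ℤ) : ℝ)) = - fun i => (auxT σ K i : ℝ) := by
      ext i; simp
    unfold auxF
    rw [auxS_neg, auxT_neg, heven, h1, hnneg, hnneg]
  have hFpos : ∀ σ (K : (i : Fin m) → Finset (Fin (N i))) x c, 0 ≤ c →
      auxF C ns σ K (c • x) = c * auxF C ns σ K x := by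
    intro σ K x c hc
    unfold auxF
    rw [auxS_smul _ _ _ _ hc, hns, abs_of_nonneg hc]
    ring
  let I := (Fin m → ℤˣ) × ((i : Fin m) → Finset (Fin (N i)))
  let nrm : ((Σ i : Fin m, Fin (N i)) → ℝ) → ℝ := fun x => ⨆ p : I, auxF C ns p.1 p.2 x
  have hle : ∀ x σ K, auxF C ns σ K x ≤ nrm x := fun x σ K =>
    le_ciSup (f := fun p : I => auxF C ns p.1 p.2 x) (Set.finite_range _).bddAbove (σ, K)
  have hsup : ∀ x B, (∀ σ K, auxF C ns σ K x ≤ B) → nrm x ≤ B := fun x B h =>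
    ciSup_le fun p : I => h p.1 p.2
  have hnn : ∀ x, 0 ≤ nrm x := fun x => (hF0 1 (fun _ => ∅) x).trans (hle _ _ _)
  have hsm : ∀ (c : ℝ) x, nrm (c • x) ≤ |c| * nrm x := by
    intro c x
    apply hsup
    intro σ K
    rcases le_total 0 c with hc | hc
    · rw [hFpos _ _ _ _ hc, abs_of_nonneg hc]
      exact mul_le_mul_of_nonneg_left (hle _ _ _) hc
    · have : c • x = -((-c) • x) := by simp
      rw [this, hFneg, hFpos _ _ _ _ (by linarith), abs_of_nonpos hc]
      exact mul_le_mul_of_nonneg_left (hle _ _ _) (by linarith)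
  refine ⟨nrm, ⟨hnn, ?_, ?_, ?_⟩, ?_, ?_⟩
  · intro x
    constructor
    · intro hx
      by_contra hne
      obtain ⟨⟨i, j⟩, hij⟩ := Function.ne_iff.mp hne
      simp only [Pi.zero_apply] at hij
      obtain ⟨u, hu⟩ : ∃ u : ℤˣ, 0 < ((u : ℤ) : ℝ) * x ⟨i, j⟩ := by
        rcases lt_or_gt_of_ne hij with h | h
        · exact ⟨-1, by simpa using h⟩
        · exact ⟨1, by simpa using h⟩
      let K : (i : Fin m) → Finset (Fin (N i)) :=
        Function.update (fun _ => ∅) i {j}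
      have hKi : K i = {j} := by simp [K]
      have h := hle x (fun _ => u) K
      rw [hx] at h
      have hT : auxT (fun _ => u) K ≠ 0 := by
        intro h0
        have := congrFun h0 i
        simp [auxT, hKi] at this
      have hS : auxS (fun _ => u) K x ≠ 0 := by
        intro h0
        have := congrFun h0 i
        simp [auxS, hKi] at this
        linarith
      have hT' : (fun i => (auxT (fun _ => u) K i : ℝ)) ≠ 0 := by
        intro h0
        apply hT
        ext i
        have := congrFun h0 i
        simpa using this
      have : 0 < auxF C ns (fun _ => u) K x := by
        refine mul_pos (div_pos ?_ ?_) ?_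
        · exact lt_of_le_of_ne (hC0 _) fun h => hT ((hzero _).1 h.symm)
        · exact lt_of_le_of_ne (hn0 _) fun h => hT' ((hnz _).1 h.symm)
        · exact lt_of_le_of_ne (hn0 _) fun h => hS ((hnz _).1 h.symm)
      linarith
    · rintro rfl
      have := hsm 0 0
      simp at this
      exact le_antisymm this (hnn _)
  · intro x y
    apply hsup
    intro σ K
    calc auxF C ns σ K (x + y) ≤ auxF C ns σ K x + auxF C ns σ K y := by
          unfold auxF
          rw [← mul_add]
          exact mul_le_mul_of_nonneg_left ((hnm _ _ (auxS_add σ K x y)).trans (hna _ _))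
            (div_nonneg (hC0 _) (hn0 _))
      _ ≤ _ := add_le_add (hle _ _ _) (hle _ _ _)
  · intro c x
    apply le_antisymm (hsm c x)
    by_cases hc : c = 0
    · subst hc
      simpa using hnn 0
    · have h := hsm c⁻¹ (c • x)
      rw [smul_smul, inv_mul_cancel₀ hc, one_smul, abs_inv] at h
      have hc' : 0 < |c| := abs_pos.2 hc
      rwa [inv_mul_eq_div, le_div_iff₀ hc', mul_comm] at h
  · intro x y hxy
    apply hsup
    intro σ K
    refine le_trans ?_ (hle y σ K)
    exact mul_le_mul_of_nonneg_left (hnm _ _ (auxS_mono σ K x y hxy))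
      (div_nonneg (hC0 _) (hn0 _))
  · intro θ hθ K' hK'
    apply le_antisymm
    · by_cases h0 : θ = 0
      · rw [(hzero θ).2 h0]
        exact hnn _
      let σ : Fin m → ℤˣ := fun i => if θ i < 0 then -1 else 1
      have hT : auxT σ K' = θ := by
        ext i
        simp only [auxT, σ, hK' i]
        split_ifs with h
        · rw [Int.natCast_natAbs, abs_of_neg h]; simp
        · rw [Int.natCast_natAbs, abs_of_nonneg (not_lt.1 h)]; simp
      refine le_trans (le_of_eq ?_) (hle _ σ K')
      have hS : auxS σ K' (fun j => ((θ j.1).sign : ℝ) * (if j.2 ∈ K' j.1 then 1 else 0))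
          = fun i => (θ i : ℝ) := by
        ext i
        have hTi : (auxT σ K' i : ℝ) = θ i := by rw [hT]
        rw [← hTi]
        simp only [auxS, auxT]
        push_cast
        congr 1
        by_cases hz : θ i = 0
        · have := hK' i
          rw [hz] at this
          simp at this
          simp [this]
        have hs : ((σ i : ℤ) : ℝ) * ((θ i).sign : ℝ) = 1 := by
          rcases lt_or_gt_of_ne hz with h | h
          · simp [σ, h, Int.sign_eq_neg_one_of_neg h]
          · simp [σ, not_lt.2 h.le, Int.sign_eq_one_of_pos h]
        rw [Finset.sum_congr rfl (g := fun _ => (1:ℝ))]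
        · simp
        · intro j hj
          simp [hj, hs]
      unfold auxF
      rw [hS, hT, div_mul_cancel₀]
      intro h
      apply h0
      ext i
      have := congrFun ((hnz _).1 h) i
      simpa using this
    · apply hsup
      intro σ K
      let P : Fin m → ℤ := fun i =>
        (σ i : ℤ) * (if (θ i).sign = (σ i : ℤ) then ((K i ∩ K' i).card : ℤ) else 0)
      have hS : auxS σ K (fun j => ((θ j.1).sign : ℝ) * (if j.2 ∈ K' j.1 then 1 else 0))
          = fun i => (P i : ℝ) := by
        ext i
        simp only [auxS, P]
        push_cast
        congr 1
        split_ifs with h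
        · rw [h, ← Finset.filter_mem_eq_inter, Finset.card_filter]
          push_cast
          apply Finset.sum_congr rfl
          intro j _
          have : ((σ i : ℤ) : ℝ) * ((σ i : ℤ) : ℝ) = 1 := by
            rcases Int.units_eq_one_or (σ i) with hu | hu <;> simp [hu]
          rw [← mul_assoc, this]
          split_ifs <;> simp
        · apply Finset.sum_eq_zero
          intro j _
          have : ((σ i : ℤ) : ℝ) * ((θ i).sign : ℝ) ≤ 0 := by
            rcases Int.units_eq_one_or (σ i) with hu | hu <;>
            rcases lt_trichotomy (θ i) 0 with h1 | h1 | h1 <;>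
            simp_all [Int.sign_eq_neg_one_of_neg, Int.sign_eq_one_of_pos]
          rw [← mul_assoc]
          split_ifs <;> simp [this]
      have hPT : PreOrdInt P (auxT σ K) := by
        intro i
        apply preord_unit_int
        · split_ifs <;> positivity
        · split_ifs
          · exact_mod_cast Finset.card_le_card Finset.inter_subset_left
          · positivity
      have hPθ : PreOrdInt P θ := by
        intro i
        by_cases h : (θ i).sign = (σ i : ℤ)
        · have e : θ i = (σ i : ℤ) * |θ i| := by
            rw [← h, Int.sign_mul_abs]
          have e2 : P i = (σ i : ℤ) * ((K i ∩ K' i).card : ℤ) := by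
            simp only [P, if_pos h]
          have key : ((K i ∩ K' i).card : ℤ) ≤ |θ i| := by
            have := Finset.card_le_card (Finset.inter_subset_right (s₁ := K i) (s₂ := K' i))
            rw [hK' i] at this
            rw [← Int.natCast_natAbs]
            exact_mod_cast this
          have := preord_unit_int (σ i) _ _ (Int.natCast_nonneg _) key
          rwa [← e, ← e2] at this
        · simp [P, h]
      unfold auxF
      rw [hS]
      by_cases hP : P = 0
      · have : (fun i => (P i : ℝ)) = 0 := by ext i; simp [hP]
        rw [this, (hnz 0).2 rfl, mul_zero]
        exact hC0 _
      · have hT0 : auxT σ K ≠ 0 := by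
          intro h
          apply hP
          ext i
          have := (hPT i).1
          rw [h] at this
          simpa using this
        have h1 := hsub _ _ hT0 hP hPT
        have hpos : 0 < ns (fun i => (P i : ℝ)) := by
          refine lt_of_le_of_ne (hn0 _) fun h => hP ?_
          ext i
          have := congrFun ((hnz _).1 h.symm) i
          simpa using this
        rw [le_div_iff₀ hpos] at h1
        exact h1.trans (hmono _ _ hPθ)
end

section
/- Let m ≥ 1 and let C : ℤ^m → [0,∞) satisfy: (i) C is even and C(x) = 0 iff x = 0; (ii) C(x) ≤ C(y) whenever x ⪯ y; (iii') there exists a monotone norm ∥·∥⋆ on ℝ^m such that C(x)/∥x∥⋆ ≤ C(x')/∥x'∥⋆ for all nonzero x', x ∈ ℤ^m with x' ⪯ x; and additionally C(x) = C(x̄) for every x ∈ ℤ^m. Fix positive integers N_1, …, N_m with N := N_1 + … + N_m. Then the set K := conv{q_D : D ∈ Ā \ {0}} is a compact, convex set, symmetric with respect to the origin, with 0 in its interior, and the norm on ℝ^N whose unit ball is K is monotone and satisfies the compatibility equation for C. -/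
/-- `D ∈ Ā`, i.e. all coordinates of `D ∈ ℤ^N` lie in `{-1, 0, 1}`. -/
def inAbar {m : ℕ} {N : Fin m → ℕ} (D : (Σ i : Fin m, Fin (N i)) → ℤ) : Prop :=
  ∀ j, D j = -1 ∨ D j = 0 ∨ D j = 1

/-- `β(D̄) ∈ ℤ^m`: the vector of block sums of the coordinatewise absolute value of
`D`. -/
def blockAbsSum {m : ℕ} (N : Fin m → ℕ) (D : (Σ i : Fin m, Fin (N i)) → ℤ) :
    Fin m → ℤ :=
  fun i => ∑ k : Fin (N i), |D ⟨i, k⟩|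

/-- `c_D := C(β(D̄))`. -/
def cD {m : ℕ} (N : Fin m → ℕ) (C : (Fin m → ℤ) → ℝ)
    (D : (Σ i : Fin m, Fin (N i)) → ℤ) : ℝ :=
  C (blockAbsSum N D)

/-- `q_D := D / c_D ∈ ℝ^N`. -/
noncomputable def qD {m : ℕ} (N : Fin m → ℕ) (C : (Fin m → ℤ) → ℝ)
    (D : (Σ i : Fin m, Fin (N i)) → ℤ) : (Σ i : Fin m, Fin (N i)) → ℝ :=
  fun j => (D j : ℝ) / cD N C D

/-- `K := conv {q_D : D ∈ Ā \ {0}} ⊆ ℝ^N`. -/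
def Kconv {m : ℕ} (N : Fin m → ℕ) (C : (Fin m → ℤ) → ℝ) :
    Set ((Σ i : Fin m, Fin (N i)) → ℝ) :=
  convexHull ℝ {v | ∃ D, inAbar D ∧ D ≠ 0 ∧ v = qD N C D}

section helpers
open scoped Pointwise
variable {m : ℕ} {N : Fin m → ℕ} {C : (Fin m → ℤ) → ℝ}

lemma blockAbsSum_ne_zero {D : (Σ i : Fin m, Fin (N i)) → ℤ} (hD : D ≠ 0) :
    blockAbsSum N D ≠ 0 := by
  intro h
  apply hD
  funext ⟨i, k⟩
  have h1 := congrFun h i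
  simp only [blockAbsSum, Pi.zero_apply] at h1
  have h2 := (Finset.sum_eq_zero_iff_of_nonneg (fun k _ => abs_nonneg _)).1 h1 k (Finset.mem_univ _)
  simpa using h2

lemma cD_pos (hC0 : ∀ x, 0 ≤ C x) (hzero : ∀ x, C x = 0 ↔ x = 0)
    {D : (Σ i : Fin m, Fin (N i)) → ℤ} (hD : D ≠ 0) : 0 < cD N C D :=
  lt_of_le_of_ne (hC0 _) (fun h => blockAbsSum_ne_zero hD ((hzero _).1 h.symm))

lemma qD_mem {D : (Σ i : Fin m, Fin (N i)) → ℤ} (hA : inAbar D) (hD : D ≠ 0) :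
    qD N C D ∈ Kconv N C := subset_convexHull ℝ _ ⟨D, hA, hD, rfl⟩

lemma Kconv_compact : IsCompact (Kconv N C) := by
  apply Set.Finite.isCompact_convexHull
  have hf : {D : (Σ i : Fin m, Fin (N i)) → ℤ | inAbar D}.Finite := by
    refine (Set.Finite.pi (t := fun _ => ({-1, 0, 1} : Set ℤ)) (fun _ => by simp)).subset ?_
    intro D hD j _
    simpa using hD j
  refine (hf.image (qD N C)).subset ?_
  rintro v ⟨D, hA, _, rfl⟩
  exact ⟨D, hA, rfl⟩

lemma qD_neg (D : (Σ i : Fin m, Fin (N i)) → ℤ) : qD N C (-D) = - qD N C D := by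
  funext j
  have h : blockAbsSum N (-D) = blockAbsSum N D := by
    funext i
    simp [blockAbsSum]
  simp [qD, cD, neg_div, h]

lemma Kconv_symm : ∀ x ∈ Kconv N C, -x ∈ Kconv N C := by
  intro x hx
  have : Kconv N C ⊆ (-(LinearMap.id : ((Σ i : Fin m, Fin (N i)) → ℝ) →ₗ[ℝ] _)) ⁻¹' Kconv N C := by
    apply convexHull_min
    · rintro v ⟨D, hA, hD, rfl⟩
      have : qD N C (-D) ∈ Kconv N C := by
        apply qD_mem
        · intro j
          have := hA j
          simp only [Pi.neg_apply]
          omega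
        · simpa using hD
      rw [qD_neg] at this
      simpa using this
    · exact (convex_convexHull ℝ _).linear_preimage _
  simpa using this hx

lemma Kconv_zero {v : (Σ i : Fin m, Fin (N i)) → ℝ} (hv : v ∈ Kconv N C) :
    0 ∈ Kconv N C := by
  have hc : Convex ℝ (Kconv N C) := convex_convexHull ℝ _
  have := hc hv (Kconv_symm v hv) (a := 1/2) (b := 1/2)
    (by norm_num) (by norm_num) (by norm_num)
  simpa using this

lemma Kconv_solid (hC0 : ∀ x, 0 ≤ C x) (hzero : ∀ x, C x = 0 ↔ x = 0)
    (hmono : ∀ x y, PreOrdInt x y → C x ≤ C y)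
    {t w : (Σ i : Fin m, Fin (N i)) → ℝ} (ht : ∀ j, t j ∈ Set.Icc (0:ℝ) 1)
    (hw : w ∈ Kconv N C) : t * w ∈ Kconv N C := by
  have h0 : 0 ∈ Kconv N C := Kconv_zero hw
  have hcube : t ∈ convexHull ℝ (Set.univ.pi
      (fun _ : (Σ i : Fin m, Fin (N i)) => ({0, 1} : Set ℝ))) := by
    rw [convexHull_pi]
    intro j _
    rw [convexHull_pair, segment_eq_Icc zero_le_one]
    exact ht j
  have hsub : convexHull ℝ (Set.univ.pi
      (fun _ : (Σ i : Fin m, Fin (N i)) => ({0, 1} : Set ℝ))) ⊆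
      (LinearMap.mulRight ℝ w) ⁻¹' Kconv N C := by
    apply convexHull_min _ ((convex_convexHull ℝ _).linear_preimage _)
    intro s hs
    have hs' : ∀ j, s j = 0 ∨ s j = 1 := fun j => by simpa using hs j trivial
    have : Kconv N C ⊆ (LinearMap.mulLeft ℝ s) ⁻¹' Kconv N C := by
      apply convexHull_min _ ((convex_convexHull ℝ _).linear_preimage _)
      rintro v ⟨D, hA, hD, rfl⟩
      simp only [Set.mem_preimage, LinearMap.mulLeft_apply]
      classical
      set D' : (Σ i : Fin m, Fin (N i)) → ℤ := fun j => if s j = 0 then 0 else D j with hD'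
      have hc := cD_pos hC0 hzero hD
      have key : s * qD N C D = (cD N C D' / cD N C D) • qD N C D' := by
        by_cases hz : D' = 0
        · have : cD N C D' = 0 := by
            rw [hz, cD, hzero]; funext i; simp [blockAbsSum]
          rw [this, zero_div, zero_smul]
          funext j
          have h1 := congrFun hz j
          simp only [hD', Pi.zero_apply, ite_eq_left_iff] at h1
          by_cases h2 : s j = 0
          · simp [h2]
          · simp [qD, h1 h2]
        · have hc' := cD_pos hC0 hzero hz
          funext j
          simp only [Pi.mul_apply, Pi.smul_apply, qD, smul_eq_mul]
          rcases hs' j with h | h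
          · simp [hD', h]
          · have : D' j = D j := by simp [hD', h]
            rw [h, this]
            field_simp
      rw [key]
      by_cases hz : D' = 0
      · have : cD N C D' = 0 := by
          rw [hz, cD, hzero]; funext i; simp [blockAbsSum]
        rw [this, zero_div, zero_smul]
        exact h0
      · apply (convex_convexHull ℝ _).smul_mem_of_zero_mem h0
        · apply qD_mem _ hz
          intro j
          have := hA j
          simp only [hD']
          split_ifs <;> omega
        · refine ⟨div_nonneg (hC0 _) (hC0 _), (div_le_one hc).2 ?_⟩
          apply hmono
          intro i
          have h1 : 0 ≤ blockAbsSum N D' i := Finset.sum_nonneg fun _ _ => abs_nonneg _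
          have h2 : blockAbsSum N D' i ≤ blockAbsSum N D i := by
            apply Finset.sum_le_sum
            intro k _
            simp only [hD']
            split_ifs <;> simp
          exact ⟨abs_le_abs_of_nonneg h1 h2, mul_nonneg h1 (h1.trans h2)⟩
    exact this hw
  simpa using hsub hcube

lemma PreOrd.exists_mul {ι : Type*} {x y : ι → ℝ} (h : PreOrd x y) :
    ∃ t : ι → ℝ, (∀ j, t j ∈ Set.Icc (0:ℝ) 1) ∧ x = t * y := by
  refine ⟨fun j => x j / y j, fun j => ?_, ?_⟩
  · obtain ⟨h1, h2⟩ := h j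
    have h3 : 0 ≤ x j / y j := by
      rw [div_eq_mul_inv]
      rcases eq_or_ne (y j) 0 with h0 | h0
      · simp [h0]
      · have : x j * (y j)⁻¹ = (x j * y j) * ((y j)⁻¹)^2 := by field_simp
        rw [this]; positivity
    refine ⟨h3, ?_⟩
    show x j / y j ≤ 1
    rw [← abs_of_nonneg h3, abs_div]
    exact div_le_one_of_le₀ h1 (abs_nonneg _)
  · funext j
    obtain ⟨h1, h2⟩ := h j
    simp only [Pi.mul_apply]
    rcases eq_or_ne (y j) 0 with h0 | h0
    · have : x j = 0 := by simpa [h0] using h1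
      simp [h0, this]
    · field_simp

lemma Kconv_nhds (hm : 1 ≤ m) (hN : ∀ i, 0 < N i)
    (hC0 : ∀ x, 0 ≤ C x) (hzero : ∀ x, C x = 0 ↔ x = 0)
    (hmono : ∀ x y, PreOrdInt x y → C x ≤ C y) : Kconv N C ∈ nhds 0 := by
  set c : ℝ := C (fun i => (N i : ℤ)) with hc
  let j0 : (Σ i : Fin m, Fin (N i)) := ⟨⟨0, hm⟩, ⟨0, hN _⟩⟩
  have hcpos : 0 < c := by
    refine lt_of_le_of_ne (hC0 _) (fun h => ?_)
    have := congrFun ((hzero _).1 h.symm) ⟨0, hm⟩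
    have h2 := hN ⟨0, hm⟩
    simp at this
    omega
  refine Filter.mem_of_superset (Metric.ball_mem_nhds 0 (ε := 1 / c) (by positivity)) ?_
  intro y hy
  rw [mem_ball_zero_iff] at hy
  classical
  let D : (Σ i : Fin m, Fin (N i)) → ℤ := fun j => if 0 ≤ y j then 1 else -1
  have hA : inAbar D := by
    intro j; simp only [D]; split_ifs <;> simp
  have hDne : D ≠ 0 := by
    intro h
    have := congrFun h j0
    simp only [D, Pi.zero_apply] at this
    split_ifs at this <;> omega
  have hcD : cD N C D = c := by
    rw [cD, hc]
    congr 1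
    funext i
    have : ∀ k, |D ⟨i, k⟩| = 1 := by
      intro k; simp only [D]; split_ifs <;> simp
    simp [blockAbsSum, this]
  have hP : PreOrd y (qD N C D) := by
    intro j
    have h1 : |y j| ≤ 1 / c := (norm_le_pi_norm y j).trans hy.le
    simp only [qD, hcD]
    by_cases h : 0 ≤ y j
    · have : D j = 1 := by simp [D, h]
      rw [this]
      refine ⟨by rw [Int.cast_one, abs_of_pos (show 0 < 1 / c by positivity)]; exact h1, ?_⟩
      push_cast; positivity
    · have : D j = -1 := by simp [D, h]
      rw [this]
      push_cast
      rw [neg_div, abs_neg, abs_of_pos (show 0 < 1 / c by positivity)]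
      refine ⟨h1, ?_⟩
      have : 0 < 1 / c := by positivity
      nlinarith
  obtain ⟨t, ht, hyt⟩ := hP.exists_mul
  rw [hyt]
  exact Kconv_solid hC0 hzero hmono ht (qD_mem hA hDne)

lemma lower_bound (hC0 : ∀ x, 0 ≤ C x) (hzero : ∀ x, C x = 0 ↔ x = 0)
    (hmono : ∀ x y, PreOrdInt x y → C x ≤ C y)
    (hsublin : ∃ nrmStar : (Fin m → ℝ) → ℝ, IsNorm nrmStar ∧
      (∀ x y : Fin m → ℝ, PreOrd x y → nrmStar x ≤ nrmStar y) ∧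
      ∀ x x' : Fin m → ℤ, x ≠ 0 → x' ≠ 0 → PreOrdInt x' x →
        C x / nrmStar (fun i => (x i : ℝ)) ≤ C x' / nrmStar (fun i => (x' i : ℝ)))
    {D : (Σ i : Fin m, Fin (N i)) → ℤ} (hA : inAbar D) (hD : D ≠ 0) {r : ℝ} (hr : 0 < r)
    (hmem : (fun j => (D j : ℝ)) ∈ r • Kconv N C) : cD N C D ≤ r := by
  obtain ⟨S, ⟨S0, Sz, Sadd, Ssmul⟩, Smono, Ssub⟩ := hsublin
  have hx := blockAbsSum_ne_zero hD
  set x := blockAbsSum N D with hxdef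
  have hxpos : 0 < S (fun i => (x i : ℝ)) := by
    refine lt_of_le_of_ne (S0 _) (fun h => hx ?_)
    have := (Sz _).1 h.symm
    funext i
    have := congrFun this i
    simpa using this
  -- block sums of absolute values restricted to the support of D
  let B : ((Σ i : Fin m, Fin (N i)) → ℝ) → Fin m → ℝ :=
    fun v i => ∑ k : Fin (N i), |(D ⟨i, k⟩ : ℝ)| * |v ⟨i, k⟩|
  have B0 : ∀ v i, 0 ≤ B v i := fun v i => Finset.sum_nonneg fun k _ => by positivity
  have Smono' : ∀ a b : Fin m → ℝ, (∀ i, 0 ≤ a i) → (∀ i, a i ≤ b i) → S a ≤ S b := by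
    intro a b ha hab
    apply Smono
    intro i
    exact ⟨abs_le_abs_of_nonneg (ha i) (hab i), mul_nonneg (ha i) ((ha i).trans (hab i))⟩
  have Bsmul : ∀ (a : ℝ) v, 0 ≤ a → B (a • v) = a • B v := by
    intro a v ha
    funext i
    simp only [B, Pi.smul_apply, smul_eq_mul, abs_mul, abs_of_nonneg ha, Finset.mul_sum]
    exact Finset.sum_congr rfl fun k _ => by ring
  have Badd : ∀ v w i, B (v + w) i ≤ (B v + B w) i := by
    intro v w i
    simp only [B, Pi.add_apply, ← Finset.sum_add_distrib, ← mul_add]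
    exact Finset.sum_le_sum fun k _ => mul_le_mul_of_nonneg_left (abs_add_le _ _) (abs_nonneg _)
  set R : ℝ := S (fun i => (x i : ℝ)) / C x with hR
  have hCx : 0 < C x := cD_pos hC0 hzero hD
  have hK : Kconv N C ⊆ {v | S (B v) ≤ R} := by
    apply convexHull_min
    · rintro v ⟨E, hE, hE0, rfl⟩
      have hcE := cD_pos hC0 hzero hE0
      let x' : Fin m → ℤ := fun i => ∑ k : Fin (N i), |D ⟨i, k⟩| * |E ⟨i, k⟩|
      have hBq : B (qD N C E) = (1 / cD N C E) • (fun i => (x' i : ℝ)) := by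
        funext i
        simp only [B, qD, x', Pi.smul_apply, smul_eq_mul, abs_div, abs_of_pos hcE]
        push_cast
        rw [Finset.mul_sum]
        exact Finset.sum_congr rfl fun k _ => by ring
      have hx'0 : ∀ i, 0 ≤ x' i := fun i => Finset.sum_nonneg fun k _ => by positivity
      have habs : ∀ {F : (Σ i : Fin m, Fin (N i)) → ℤ}, inAbar F → ∀ j, |F j| ≤ 1 := by
        intro F hF j
        rcases hF j with h | h | h <;> simp [h]
      have hx'x : ∀ i, x' i ≤ x i := fun i => Finset.sum_le_sum fun k _ =>
        mul_le_of_le_one_right (abs_nonneg _) (habs hE _)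
      have hx'E : ∀ i, x' i ≤ blockAbsSum N E i := fun i => Finset.sum_le_sum fun k _ =>
        mul_le_of_le_one_left (abs_nonneg _) (habs hA _)
      have hpre : ∀ {a b : Fin m → ℤ}, (∀ i, 0 ≤ a i) → (∀ i, a i ≤ b i) → PreOrdInt a b := by
        intro a b ha hab i
        exact ⟨abs_le_abs_of_nonneg (ha i) (hab i), mul_nonneg (ha i) ((ha i).trans (hab i))⟩
      simp only [Set.mem_setOf_eq]
      rw [hBq, Ssmul, abs_of_pos (by positivity)]
      by_cases hx' : x' = 0
      · have : S (fun i => (x' i : ℝ)) = 0 := by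
          rw [Sz]; funext i; simp [hx']
        rw [this, mul_zero]
        positivity
      · have hS' : 0 < S (fun i => (x' i : ℝ)) := by
          refine lt_of_le_of_ne (S0 _) (fun h => hx' ?_)
          have := (Sz _).1 h.symm
          funext i
          have := congrFun this i
          simpa using this
        have h1 := Ssub x x' hx hx' (hpre hx'0 hx'x)
        have h2 : C x' ≤ cD N C E := hmono _ _ (hpre hx'0 hx'E)
        rw [div_le_div_iff₀ hxpos hS'] at h1
        rw [hR, one_div_mul_eq_div, div_le_div_iff₀ hcE hCx]
        nlinarith
    · intro v hv w hw a b ha hb hab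
      simp only [Set.mem_setOf_eq] at *
      calc S (B (a • v + b • w)) ≤ S (B (a • v) + B (b • w)) := Smono' _ _ (B0 _) (Badd _ _)
        _ ≤ S (B (a • v)) + S (B (b • w)) := Sadd _ _
        _ = a * S (B v) + b * S (B w) := by
          rw [Bsmul a v ha, Bsmul b w hb, Ssmul, Ssmul, abs_of_nonneg ha, abs_of_nonneg hb]
        _ ≤ a * R + b * R := by gcongr
        _ = R := by rw [← add_mul, hab, one_mul]
  obtain ⟨w, hw, hwD⟩ := hmem
  have h1 : S (B w) ≤ R := hK hw
  have h2 : B (fun j => (D j : ℝ)) = fun i => (x i : ℝ) := by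
    funext i
    simp only [B, hxdef, blockAbsSum]
    push_cast
    refine Finset.sum_congr rfl fun k _ => ?_
    rcases hA ⟨i, k⟩ with h | h | h <;> simp [h]
  have h3 : S (fun i => (x i : ℝ)) = r * S (B w) := by
    rw [← h2, ← hwD]
    simp only
    rw [Bsmul r w hr.le, Ssmul, abs_of_pos hr]
  have h4 : S (fun i => (x i : ℝ)) ≤ r * R := by
    rw [h3]; exact mul_le_mul_of_nonneg_left h1 hr.le
  rw [hR, mul_div_assoc', le_div_iff₀ hCx] at h4
  have : C x ≤ r := by
    by_contra hlt
    push Not at hlt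
    nlinarith
  exact this

end helpers

/-- If `C : ℤ^m → [0,∞)` satisfies (i), (ii), (iii') and moreover
`C(x) = C(x̄)` for all `x`, then `K := conv {q_D : D ∈ Ā \ {0}}` is a compact, convex
set, symmetric with respect to the origin, with `0` in its interior, and the norm on
`ℝ^N` whose unit ball is `K` is monotone and satisfies the compatibility equation
for `C`. -/
theorem convex_hull_qD_gives_compatible_norm {m : ℕ} (hm : 1 ≤ m)
    (C : (Fin m → ℤ) → ℝ)
    (hC0 : ∀ x, 0 ≤ C x)
    (heven : ∀ x, C (-x) = C x)
    (hzero : ∀ x, C x = 0 ↔ x = 0)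
    (hmono : ∀ x y, PreOrdInt x y → C x ≤ C y)
    (hsublin : ∃ nrmStar : (Fin m → ℝ) → ℝ, IsNorm nrmStar ∧
      (∀ x y : Fin m → ℝ, PreOrd x y → nrmStar x ≤ nrmStar y) ∧
      ∀ x x' : Fin m → ℤ, x ≠ 0 → x' ≠ 0 → PreOrdInt x' x →
        C x / nrmStar (fun i => (x i : ℝ)) ≤ C x' / nrmStar (fun i => (x' i : ℝ)))
    (hsuper : ∀ x, C x = C fun i => |x i|)
    (N : Fin m → ℕ) (hN : ∀ i, 0 < N i) :
    IsCompact (Kconv N C) ∧ Convex ℝ (Kconv N C) ∧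
    (∀ x ∈ Kconv N C, -x ∈ Kconv N C) ∧
    (0 : (Σ i : Fin m, Fin (N i)) → ℝ) ∈ interior (Kconv N C) ∧
    ∃ nrm : ((Σ i : Fin m, Fin (N i)) → ℝ) → ℝ, IsNorm nrm ∧
      {x | nrm x ≤ 1} = Kconv N C ∧
      (∀ x y, PreOrd x y → nrm x ≤ nrm y) ∧ CompatEq m N C nrm := by
  have hconv : Convex ℝ (Kconv N C) := convex_convexHull ℝ _
  have hcomp : IsCompact (Kconv N C) := Kconv_compact
  have hnhds : Kconv N C ∈ nhds 0 := Kconv_nhds hm hN hC0 hzero hmono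
  have habs : Absorbent ℝ (Kconv N C) := absorbent_nhds_zero hnhds
  refine ⟨hcomp, hconv, Kconv_symm, mem_interior_iff_mem_nhds.2 hnhds, gauge (Kconv N C),
    ⟨gauge_nonneg, fun x => ?_, gauge_add_le hconv habs, fun c x => ?_⟩, ?_, ?_, ?_⟩
  · have h := gauge_pos (x := x) habs (NormedSpace.isVonNBounded_of_isBounded ℝ hcomp.isBounded)
    constructor
    · intro h0
      by_contra hx
      exact absurd (h.2 hx) (by simp [h0])
    · rintro rfl
      exact gauge_zero
  · rcases le_total 0 c with hc | hc
    · rw [gauge_smul_of_nonneg hc, abs_of_nonneg hc, smul_eq_mul]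
    · have h1 : c • x = -((-c) • x) := by simp
      rw [h1, gauge_neg Kconv_symm, gauge_smul_of_nonneg (neg_nonneg.2 hc), abs_of_nonpos hc,
        smul_eq_mul]
  · ext x
    rw [Set.mem_setOf_eq, gauge_le_one_iff_mem_closure hconv hnhds, hcomp.isClosed.closure_eq]
  · intro x y hxy
    obtain ⟨t, ht, rfl⟩ := hxy.exists_mul
    refine le_of_forall_gt_imp_ge_of_dense fun a ha => ?_
    obtain ⟨b, hb, hba, w, hw, rfl⟩ := exists_lt_of_gauge_lt habs ha
    refine (gauge_le_of_mem hb.le ⟨t * w, Kconv_solid hC0 hzero hmono ht hw, ?_⟩).trans hba.le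
    simp
  · intro θ hθ K hK
    classical
    let D : (Σ i : Fin m, Fin (N i)) → ℤ := fun j => (θ j.1).sign * (if j.2 ∈ K j.1 then 1 else 0)
    have hA : inAbar D := by
      intro j
      simp only [D]
      rcases Int.sign_trichotomy (θ j.1) with h | h | h <;> rw [h] <;> split_ifs <;> simp
    have hB : blockAbsSum N D = fun i => |θ i| := by
      funext i
      have h1 : ∀ k, |D ⟨i, k⟩| = |(θ i).sign| * (if k ∈ K i then 1 else 0) := by
        intro k
        simp only [D, abs_mul]
        split_ifs <;> simp
      simp only [blockAbsSum, h1]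
      rw [← Finset.mul_sum]
      simp only [Finset.sum_boole, Finset.filter_univ_mem, hK]
      rcases eq_or_ne (θ i) 0 with h | h
      · simp [h]
      · rw [Int.abs_sign_of_ne_zero h]
        simp
    have hv : (fun j : (Σ i : Fin m, Fin (N i)) =>
        ((θ j.1).sign : ℝ) * (if j.2 ∈ K j.1 then 1 else 0)) = fun j => (D j : ℝ) := by
      funext j
      simp [D]
    have hCD : C θ = cD N C D := by
      rw [hsuper, cD, hB]
    rw [hv, hCD]
    by_cases hD : D = 0
    · have h1 : cD N C D = 0 := by
        rw [hD, cD, hzero]; funext i; simp [blockAbsSum]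
      have h2 : (fun j => (D j : ℝ)) = 0 := by
        funext j; simp [hD]
      rw [h1, h2]
      exact (gauge_zero (s := Kconv N C)).symm
    · have hc := cD_pos hC0 hzero hD
      apply le_antisymm
      · refine le_of_forall_gt_imp_ge_of_dense fun a ha => ?_
        obtain ⟨b, hb, hba, hmem⟩ := exists_lt_of_gauge_lt habs ha
        exact (lower_bound hC0 hzero hmono hsublin hA hD hb hmem).trans hba.le
      · refine gauge_le_of_mem hc.le ⟨_, qD_mem hA hD, ?_⟩
        funext j
        simp only [Pi.smul_apply, qD, smul_eq_mul]
        field_simp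
end

section
/- Let m ≥ 1 and let C : ℤ^m → [0,∞) satisfy: (i) C is even and C(x) = 0 iff x = 0; (ii) C(x) ≤ C(y) whenever x ⪯ y; (iii') there exists a monotone norm ∥·∥⋆ on ℝ^m such that C(x)/∥x∥⋆ ≤ C(x')/∥x'∥⋆ for all nonzero x', x ∈ ℤ^m with x' ⪯ x. Fix positive integers N_1, …, N_m with N := N_1 + … + N_m. Then for every pair of sign vectors s, s' ∈ {−1,1}^m one has A_{s'} ∩ H_s = conv({0} ∪ {q_D^{(s')} : D ∈ Ā ∩ H_s ∩ H_{s'}, D ≠ 0}); moreover for D ∈ Ā ∩ H_s ∩ H_{s'} \ {0} one has q_D^{(s)} = q_D^{(s')}, and in particular A_{s'} ∩ H_s = A_s ∩ H_{s'}. -/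
/-- `s ∈ {-1, 1}^m` is a sign vector. -/
def SignVec {m : ℕ} (s : Fin m → ℤ) : Prop := ∀ i, s i = 1 ∨ s i = -1

/-- The cost `C_s(x) := C(s_1 |x_1|, …, s_m |x_m|)`. -/
def Csgn {m : ℕ} (C : (Fin m → ℤ) → ℝ) (s : Fin m → ℤ) : (Fin m → ℤ) → ℝ :=
  fun x => C fun i => s i * |x i|

/-- The vector `τ_s ∈ ℝ^N`, equal to `s i` on the block `B_i`. -/
def tauS {m : ℕ} (N : Fin m → ℕ) (s : Fin m → ℤ) : (Σ i : Fin m, Fin (N i)) → ℝ :=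
  fun j => (s j.1 : ℝ)

/-- The orthant `H_s := {p ∈ ℝ^N : (τ_s)_j p_j ≥ 0 for all j}`. -/
def HsSet {m : ℕ} (N : Fin m → ℕ) (s : Fin m → ℤ) :
    Set ((Σ i : Fin m, Fin (N i)) → ℝ) :=
  {p | ∀ j, 0 ≤ tauS N s j * p j}

/-- `q_D^{(s)} := D / C_s(β(D̄))`. -/
noncomputable def qDs {m : ℕ} (N : Fin m → ℕ) (C : (Fin m → ℤ) → ℝ)
    (s : Fin m → ℤ) (D : (Σ i : Fin m, Fin (N i)) → ℤ) :
    (Σ i : Fin m, Fin (N i)) → ℝ :=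
  fun j => (D j : ℝ) / Csgn C s (blockAbsSum N D)

/-- `B_s := conv {q_D^{(s)} : D ∈ Ā \ {0}}`. -/
noncomputable def BsSet {m : ℕ} (N : Fin m → ℕ) (C : (Fin m → ℤ) → ℝ)
    (s : Fin m → ℤ) : Set ((Σ i : Fin m, Fin (N i)) → ℝ) :=
  convexHull ℝ {v | ∃ D, inAbar D ∧ D ≠ 0 ∧ v = qDs N C s D}

/-- `A_s := H_s ∩ B_s`. -/
noncomputable def AsSet {m : ℕ} (N : Fin m → ℕ) (C : (Fin m → ℤ) → ℝ)
    (s : Fin m → ℤ) : Set ((Σ i : Fin m, Fin (N i)) → ℝ) :=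
  HsSet N s ∩ BsSet N C s

noncomputable def KSet {m : ℕ} (N : Fin m → ℕ) (C : (Fin m → ℤ) → ℝ) (s s' : Fin m → ℤ) :
    Set ((Σ i : Fin m, Fin (N i)) → ℝ) :=
  convexHull ℝ ({0} ∪ {v | ∃ D, inAbar D ∧ D ≠ 0 ∧
          (fun j => (D j : ℝ)) ∈ HsSet N s ∧ (fun j => (D j : ℝ)) ∈ HsSet N s' ∧
          v = qDs N C s' D})

theorem KSet_convex {m : ℕ} (N : Fin m → ℕ) (C : (Fin m → ℤ) → ℝ) (s s' : Fin m → ℤ) :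
    Convex ℝ (KSet N C s s') := convex_convexHull ℝ _

theorem BsSet_convex {m : ℕ} (N : Fin m → ℕ) (C : (Fin m → ℤ) → ℝ) (s : Fin m → ℤ) :
    Convex ℝ (BsSet N C s) := convex_convexHull ℝ _

theorem Csgn_mono {m : ℕ} {N : Fin m → ℕ} {C : (Fin m → ℤ) → ℝ}
    (hmono : ∀ x y, PreOrdInt x y → C x ≤ C y) (s : Fin m → ℤ)
    (E D : (Σ i : Fin m, Fin (N i)) → ℤ) (h : ∀ j, |E j| ≤ |D j|) :
    Csgn C s (blockAbsSum N E) ≤ Csgn C s (blockAbsSum N D) := by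
  apply hmono
  intro i
  have h0 : 0 ≤ blockAbsSum N E i := Finset.sum_nonneg fun k _ => abs_nonneg _
  have h1 : blockAbsSum N E i ≤ blockAbsSum N D i := Finset.sum_le_sum fun k _ => h _
  have h2 := h0.trans h1
  simp only [abs_mul, abs_abs, abs_of_nonneg h0, abs_of_nonneg h2]
  constructor
  · exact mul_le_mul_of_nonneg_left h1 (abs_nonneg _)
  · have : s i * blockAbsSum N E i * (s i * blockAbsSum N D i)
      = (s i * s i) * (blockAbsSum N E i * blockAbsSum N D i) := by ring
    rw [this]
    exact mul_nonneg (mul_self_nonneg _) (mul_nonneg h0 h2)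

theorem Csgn_pos {m : ℕ} {N : Fin m → ℕ} {C : (Fin m → ℤ) → ℝ}
    (hC0 : ∀ x, 0 ≤ C x) (hzero : ∀ x, C x = 0 ↔ x = 0) {s : Fin m → ℤ} (hs : SignVec s)
    (D : (Σ i : Fin m, Fin (N i)) → ℤ) (hD : D ≠ 0) :
    0 < Csgn C s (blockAbsSum N D) := by
  refine lt_of_le_of_ne (hC0 _) fun h => hD ?_
  have h1 := (hzero _).1 h.symm
  funext ⟨i, k⟩
  have h2 := congrFun h1 i
  have hsi : s i ≠ 0 := by rcases hs i with h | h <;> simp [h]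
  have h3 : blockAbsSum N D i = 0 := by simpa [hsi] using h2
  have h4 := (Finset.sum_eq_zero_iff_of_nonneg (fun k _ => abs_nonneg _)).1 h3 k (Finset.mem_univ _)
  simpa using h4

theorem scal_mem {m : ℕ} {N : Fin m → ℕ} {C : (Fin m → ℤ) → ℝ}
    (hC0 : ∀ x, 0 ≤ C x) (hzero : ∀ x, C x = 0 ↔ x = 0) {s s' : Fin m → ℤ}
    (hs' : SignVec s')
    (E : (Σ i : Fin m, Fin (N i)) → ℤ) (hE : inAbar E)
    (h1 : (fun j => (E j : ℝ)) ∈ HsSet N s) (h2 : (fun j => (E j : ℝ)) ∈ HsSet N s')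
    (c : ℝ) (hc : 0 < c) (hle : Csgn C s' (blockAbsSum N E) ≤ c) :
    (fun j => (E j : ℝ) / c) ∈ KSet N C s s' := by
  have hz : (0 : (Σ i : Fin m, Fin (N i)) → ℝ) ∈ KSet N C s s' :=
    subset_convexHull ℝ _ (Or.inl rfl)
  by_cases h0 : E = 0
  · subst h0
    convert hz using 1
    funext j
    simp
  · have hp := Csgn_pos hC0 hzero hs' E h0
    have hq : qDs N C s' E ∈ KSet N C s s' :=
      subset_convexHull ℝ _ (Or.inr ⟨E, hE, h0, h1, h2, rfl⟩)
    have := (KSet_convex N C s s') hz hq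
      (a := 1 - Csgn C s' (blockAbsSum N E) / c) (b := Csgn C s' (blockAbsSum N E) / c)
      (sub_nonneg.2 ((div_le_one hc).2 hle)) (by positivity) (by ring)
    convert this using 1
    funext j
    simp only [qDs, Pi.add_apply, Pi.smul_apply, Pi.zero_apply, smul_eq_mul]
    field_simp
    ring

theorem zero_coord_mem {m : ℕ} {N : Fin m → ℕ} {C : (Fin m → ℤ) → ℝ}
    (hC0 : ∀ x, 0 ≤ C x) (hzero : ∀ x, C x = 0 ↔ x = 0)
    (hmono : ∀ x y, PreOrdInt x y → C x ≤ C y) {s s' : Fin m → ℤ}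
    (hs' : SignVec s') (a : Σ i : Fin m, Fin (N i)) :
    ∀ p ∈ KSet N C s s', (fun j => if j = a then 0 else p j) ∈ KSet N C s s' := by
  have hsub : KSet N C s s' ⊆ {p | (fun j => if j = a then 0 else p j) ∈ KSet N C s s'} := by
    apply convexHull_min
    · rintro p (rfl | ⟨D, hD, hD0, h1, h2, rfl⟩)
      · have hz : (0 : (Σ i : Fin m, Fin (N i)) → ℝ) ∈ KSet N C s s' :=
          subset_convexHull ℝ _ (Or.inl rfl)
        simp only [Set.mem_ofPred_eq]
        convert hz using 1
        funext j
        simp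
      · have := scal_mem (s := s) hC0 hzero hs' (fun j => if j = a then 0 else D j)
          (by intro j; have := hD j; beta_reduce; split_ifs <;> simp_all)
          (by intro j; have := h1 j; beta_reduce; split_ifs <;> simp_all)
          (by intro j; have := h2 j; beta_reduce; split_ifs <;> simp_all)
          _ (Csgn_pos hC0 hzero hs' D hD0)
          (Csgn_mono hmono s' _ D (by intro j; beta_reduce; split_ifs <;> simp))
        simp only [Set.mem_ofPred_eq]
        convert this using 1
        funext j
        simp only [qDs]
        split_ifs <;> simp
    · intro x hx y hy u v hu hv huv
      simp only [Set.mem_ofPred_eq] at *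
      have := (KSet_convex N C s s') hx hy hu hv huv
      convert this using 1
      funext j
      by_cases hj : j = a <;> simp [hj]
  exact fun p hp => hsub hp

theorem down_mem {m : ℕ} {N : Fin m → ℕ} {C : (Fin m → ℤ) → ℝ}
    (hC0 : ∀ x, 0 ≤ C x) (hzero : ∀ x, C x = 0 ↔ x = 0)
    (hmono : ∀ x y, PreOrdInt x y → C x ≤ C y) {s s' : Fin m → ℤ}
    (hs' : SignVec s') (w : (Σ i : Fin m, Fin (N i)) → ℝ) (hw0 : ∀ j, 0 ≤ w j)
    (hw1 : ∀ j, w j ≤ 1) (p : (Σ i : Fin m, Fin (N i)) → ℝ) (hp : p ∈ KSet N C s s') :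
    (fun j => w j * p j) ∈ KSet N C s s' := by
  classical
  have key : ∀ S : Finset (Σ i : Fin m, Fin (N i)),
      (fun j => if j ∈ S then w j * p j else p j) ∈ KSet N C s s' := by
    intro S
    induction S using Finset.induction_on with
    | empty => simpa using hp
    | insert a S ha ih =>
      have h2 := zero_coord_mem hC0 hzero hmono hs' a _ ih
      have := (KSet_convex N C s s') ih h2 (hw0 a) (sub_nonneg.2 (hw1 a)) (by ring)
      convert this using 1
      funext j
      by_cases hj : j = a
      · subst hj
        simp [ha]
      · simp only [Finset.mem_insert, hj, false_or, Pi.add_apply, Pi.smul_apply, smul_eq_mul,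
          if_false]
        ring
  simpa using key Finset.univ

theorem dom_mem {m : ℕ} {N : Fin m → ℕ} {C : (Fin m → ℤ) → ℝ}
    (hC0 : ∀ x, 0 ≤ C x) (hzero : ∀ x, C x = 0 ↔ x = 0)
    (hmono : ∀ x y, PreOrdInt x y → C x ≤ C y) {s s' : Fin m → ℤ}
    (hs' : SignVec s') :
    ∀ p ∈ BsSet N C s', ∃ p' ∈ KSet N C s s', ∀ j, s j.1 = s' j.1 →
      tauS N s' j * p j ≤ tauS N s' j * p' j := by
  have hsub : BsSet N C s' ⊆ {p | ∃ p' ∈ KSet N C s s', ∀ j, s j.1 = s' j.1 →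
      tauS N s' j * p j ≤ tauS N s' j * p' j} := by
    apply convexHull_min
    · rintro p ⟨D, hD, hD0, rfl⟩
      have hpos := Csgn_pos hC0 hzero hs' D hD0
      refine ⟨_, scal_mem (s := s) hC0 hzero hs'
          (fun j => if s j.1 = s' j.1 ∧ D j = s' j.1 then D j else 0) ?_ ?_ ?_
          _ hpos (Csgn_mono hmono s' _ D ?_), ?_⟩
      · intro j; have := hD j; beta_reduce; split_ifs <;> simp_all
      · intro j
        dsimp only [tauS]
        split_ifs with h
        · rw [h.1, h.2]; exact mul_self_nonneg _
        · simp
      · intro j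
        dsimp only [tauS]
        split_ifs with h
        · rw [h.2]; exact mul_self_nonneg _
        · simp
      · intro j; beta_reduce; split_ifs <;> simp
      · intro j hj
        dsimp only [tauS, qDs]
        by_cases h : D j = s' j.1
        · simp [hj, h]
        · simp only [h, and_false, if_false, Int.cast_zero, zero_div, mul_zero]
          rw [← mul_div_assoc]
          apply div_nonpos_of_nonpos_of_nonneg _ hpos.le
          rcases hs' j.1 with h' | h' <;> rcases hD j with h'' | h'' | h'' <;> simp_all
    · rintro x ⟨x', hx', hx⟩ y ⟨y', hy', hy⟩ u v hu hv huv
      refine ⟨_, (KSet_convex N C s s') hx' hy' hu hv huv, fun j hj => ?_⟩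
      have h1 := mul_le_mul_of_nonneg_left (hx j hj) hu
      have h2 := mul_le_mul_of_nonneg_left (hy j hj) hv
      simp only [Pi.add_apply, Pi.smul_apply, smul_eq_mul]
      linarith
  exact fun p hp => hsub hp

theorem HsSet_convex {m : ℕ} (N : Fin m → ℕ) (s : Fin m → ℤ) : Convex ℝ (HsSet N s) := by
  intro x hx y hy u v hu hv _ j
  have h1 := mul_nonneg hu (hx j)
  have h2 := mul_nonneg hv (hy j)
  simp only [Pi.add_apply, Pi.smul_apply, smul_eq_mul]
  linarith

theorem qDs_mem_Hs {m : ℕ} {N : Fin m → ℕ} {C : (Fin m → ℤ) → ℝ}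
    (hC0 : ∀ x, 0 ≤ C x) (s s' : Fin m → ℤ) (D : (Σ i : Fin m, Fin (N i)) → ℤ)
    (h : (fun j => (D j : ℝ)) ∈ HsSet N s) : qDs N C s' D ∈ HsSet N s := by
  intro j
  simp only [qDs]
  rw [← mul_div_assoc]
  exact div_nonneg (h j) (hC0 _)

theorem zero_mem_Bs {m : ℕ} (hm : 1 ≤ m) (C : (Fin m → ℤ) → ℝ) (N : Fin m → ℕ)
    (hN : ∀ i, 0 < N i) (s : Fin m → ℤ) : 0 ∈ BsSet N C s := by
  have h1 : qDs N C s (fun _ => 1) ∈ BsSet N C s :=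
    subset_convexHull ℝ _ ⟨_, fun _ => by simp,
      fun h => by simpa using congrFun h ⟨⟨0, hm⟩, ⟨0, hN _⟩⟩, rfl⟩
  have h2 : qDs N C s (fun _ => -1) ∈ BsSet N C s :=
    subset_convexHull ℝ _ ⟨_, fun _ => by simp,
      fun h => by simpa using congrFun h ⟨⟨0, hm⟩, ⟨0, hN _⟩⟩, rfl⟩
  have := (BsSet_convex N C s) h1 h2 (a := 1 / 2) (b := 1 / 2) (by norm_num) (by norm_num)
    (by norm_num)
  convert this using 1
  funext j
  have hb : blockAbsSum N (fun _ => -1) = blockAbsSum N (fun _ => 1) := by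
    funext i
    simp [blockAbsSum]
  simp only [qDs, hb, Pi.add_apply, Pi.smul_apply, smul_eq_mul, Pi.zero_apply]
  push_cast
  ring

theorem K_eq {m : ℕ} (hm : 1 ≤ m) {N : Fin m → ℕ} (hN : ∀ i, 0 < N i) {C : (Fin m → ℤ) → ℝ}
    (hC0 : ∀ x, 0 ≤ C x) (hzero : ∀ x, C x = 0 ↔ x = 0)
    (hmono : ∀ x y, PreOrdInt x y → C x ≤ C y) {s s' : Fin m → ℤ}
    (hs : SignVec s) (hs' : SignVec s') : AsSet N C s' ∩ HsSet N s = KSet N C s s' := by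
  apply Set.Subset.antisymm
  · rintro p ⟨⟨hp', hpB⟩, hp⟩
    obtain ⟨p', hp'K, hle⟩ := dom_mem (s := s) hC0 hzero hmono hs' p hpB
    have hcase : ∀ j, p j = 0 ∨ (0 ≤ p j ∧ p j ≤ p' j) ∨ (p j ≤ 0 ∧ p' j ≤ p j) := by
      intro j
      have h1 := hp j
      have h2 := hp' j
      have h3 := hle j
      simp only [tauS] at h1 h2 h3
      rcases hs j.1 with h | h <;> rcases hs' j.1 with h' | h' <;>
        simp only [h, h', Int.cast_one, Int.cast_neg, one_mul, neg_mul] at h1 h2 h3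
      · exact Or.inr (Or.inl ⟨h1, h3 trivial⟩)
      · left; linarith
      · left; linarith
      · right; right; have := h3 trivial; constructor <;> linarith
    have := down_mem hC0 hzero hmono hs' (fun j => p j / p' j) ?_ ?_ p' hp'K
    · convert this using 1
      funext j
      by_cases h0 : p' j = 0
      · rw [h0]
        rcases hcase j with h | h | h <;> simp <;> linarith
      · field_simp
    · intro j
      rcases hcase j with h | ⟨h, h'⟩ | ⟨h, h'⟩
      · simp [h]
      · exact div_nonneg h (h.trans h')
      · exact div_nonneg_of_nonpos h (h'.trans h)
    · intro j
      rcases hcase j with h | ⟨h, h'⟩ | ⟨h, h'⟩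
      · simp [h]
      · exact div_le_one_of_le₀ h' (h.trans h')
      · exact div_le_one_of_ge h' (h'.trans h)
  · apply convexHull_min
    · rintro p (rfl | ⟨D, hD, hD0, h1, h2, rfl⟩)
      · exact ⟨⟨fun j => by simp, zero_mem_Bs hm C N hN s'⟩, fun j => by simp⟩
      · exact ⟨⟨qDs_mem_Hs hC0 _ _ _ h2, subset_convexHull ℝ _ ⟨D, hD, hD0, rfl⟩⟩,
          qDs_mem_Hs hC0 _ _ _ h1⟩
    · exact ((HsSet_convex N s').inter (convex_convexHull ℝ _)).inter (HsSet_convex N s)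

theorem qDs_eq {m : ℕ} {N : Fin m → ℕ} (C : (Fin m → ℤ) → ℝ) {s s' : Fin m → ℤ}
    (hs : SignVec s) (hs' : SignVec s') (D : (Σ i : Fin m, Fin (N i)) → ℤ)
    (h1 : (fun j => (D j : ℝ)) ∈ HsSet N s) (h2 : (fun j => (D j : ℝ)) ∈ HsSet N s') :
    qDs N C s D = qDs N C s' D := by
  have : (fun i => s i * |blockAbsSum N D i|) = fun i => s' i * |blockAbsSum N D i| := by
    funext i
    by_cases h : s i = s' i
    · rw [h]
    · have hz : blockAbsSum N D i = 0 := by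
        apply Finset.sum_eq_zero
        intro k _
        have h3 := h1 ⟨i, k⟩
        have h4 := h2 ⟨i, k⟩
        simp only [tauS] at h3 h4
        norm_cast at h3 h4
        rw [abs_eq_zero]
        rcases hs i with h | h <;> rcases hs' i with h' | h' <;> simp_all <;> omega
      simp [hz]
  funext j
  simp only [qDs, Csgn, this]

/-- Let `C : ℤ^m → [0,∞)` satisfy (i), (ii), (iii'). Then for all
sign vectors `s, s' ∈ {-1,1}^m` one has
`A_{s'} ∩ H_s = conv({0} ∪ {q_D^{(s')} : D ∈ Ā ∩ H_s ∩ H_{s'}, D ≠ 0})`; moreover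
`q_D^{(s)} = q_D^{(s')}` for every such `D`, and in particular
`A_{s'} ∩ H_s = A_s ∩ H_{s'}`. -/
theorem interfaces_of_orthant_balls {m : ℕ} (hm : 1 ≤ m)
    (C : (Fin m → ℤ) → ℝ)
    (hC0 : ∀ x, 0 ≤ C x)
    (heven : ∀ x, C (-x) = C x)
    (hzero : ∀ x, C x = 0 ↔ x = 0)
    (hmono : ∀ x y, PreOrdInt x y → C x ≤ C y)
    (hsublin : ∃ nrmStar : (Fin m → ℝ) → ℝ, IsNorm nrmStar ∧
      (∀ x y : Fin m → ℝ, PreOrd x y → nrmStar x ≤ nrmStar y) ∧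
      ∀ x x' : Fin m → ℤ, x ≠ 0 → x' ≠ 0 → PreOrdInt x' x →
        C x / nrmStar (fun i => (x i : ℝ)) ≤ C x' / nrmStar (fun i => (x' i : ℝ)))
    (N : Fin m → ℕ) (hN : ∀ i, 0 < N i) :
    ∀ s s' : Fin m → ℤ, SignVec s → SignVec s' →
      (AsSet N C s' ∩ HsSet N s =
        convexHull ℝ ({0} ∪ {v | ∃ D, inAbar D ∧ D ≠ 0 ∧
          (fun j => (D j : ℝ)) ∈ HsSet N s ∧ (fun j => (D j : ℝ)) ∈ HsSet N s' ∧
          v = qDs N C s' D})) ∧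
      (∀ D : (Σ i : Fin m, Fin (N i)) → ℤ, inAbar D → D ≠ 0 →
        (fun j => (D j : ℝ)) ∈ HsSet N s → (fun j => (D j : ℝ)) ∈ HsSet N s' →
        qDs N C s D = qDs N C s' D) ∧
      AsSet N C s' ∩ HsSet N s = AsSet N C s ∩ HsSet N s' := by
  intro s s' hs hs'
  refine ⟨K_eq hm hN hC0 hzero hmono hs hs',
    fun D _ _ h1 h2 => qDs_eq C hs hs' D h1 h2, ?_⟩
  rw [K_eq hm hN hC0 hzero hmono hs hs', K_eq hm hN hC0 hzero hmono hs' hs]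
  unfold KSet
  congr 2
  ext v
  constructor
  · rintro ⟨D, hD, hD0, h1, h2, rfl⟩
    exact ⟨D, hD, hD0, h2, h1, (qDs_eq C hs hs' D h1 h2).symm⟩
  · rintro ⟨D, hD, hD0, h1, h2, rfl⟩
    exact ⟨D, hD, hD0, h2, h1, qDs_eq C hs hs' D h2 h1⟩
end

section
/- Let m ≥ 1 and let C : ℤ^m → [0,∞) satisfy: (i) C is even and C(x) = 0 iff x = 0; (ii) C(x) ≤ C(y) whenever x ⪯ y; (iii') there exists a monotone norm ∥·∥⋆ on ℝ^m such that C(x)/∥x∥⋆ ≤ C(x')/∥x'∥⋆ for all nonzero x', x ∈ ℤ^m with x' ⪯ x. Fix positive integers N_1, …, N_m with N := N_1 + … + N_m. For each sign vector s ∈ {−1,1}^m set C_s^♯ := {p ∈ ℝ^N : there exists q ∈ A_s with (τ_s)_j·(p_j − q_j) ≤ 0 for all j}, and set K := ∩_{s∈{−1,1}^m} C_s^♯. Then K is a closed, bounded, convex set, symmetric with respect to the origin, with nonempty interior, K is a monotone set (i.e. y ⪯ x and x ∈ K imply y ∈ K), and K ∩ H_s = A_s for every sign vector s ∈ {−1,1}^m.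 -/
/-- `C_s^♯ := {p ∈ ℝ^N : ∃ q ∈ A_s with (τ_s)_j (p_j - q_j) ≤ 0 for all j}`. -/
noncomputable def Csharp {m : ℕ} (N : Fin m → ℕ) (C : (Fin m → ℤ) → ℝ)
    (s : Fin m → ℤ) : Set ((Σ i : Fin m, Fin (N i)) → ℝ) :=
  {p | ∃ q ∈ AsSet N C s, ∀ j, tauS N s j * (p j - q j) ≤ 0}

/-- `K := ⋂_{s ∈ {-1,1}^m} C_s^♯`. -/
noncomputable def KsetInter {m : ℕ} (N : Fin m → ℕ) (C : (Fin m → ℤ) → ℝ) :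
    Set ((Σ i : Fin m, Fin (N i)) → ℝ) :=
  ⋂ (s : Fin m → ℤ) (_ : SignVec s), Csharp N C s


section Helpers

variable {m : ℕ} {N : Fin m → ℕ} {C : (Fin m → ℤ) → ℝ}

lemma aux_blk_zero {D : (Σ i : Fin m, Fin (N i)) → ℤ} {j : Σ i : Fin m, Fin (N i)}
    (h : blockAbsSum N D j.1 = 0) : D j = 0 := by
  obtain ⟨i, k⟩ := j
  have := (Finset.sum_eq_zero_iff_of_nonneg (fun k _ => abs_nonneg (D ⟨i, k⟩))).1 h k
    (Finset.mem_univ k)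
  simpa using this

lemma aux_blk_nonneg (D : (Σ i : Fin m, Fin (N i)) → ℤ) (i : Fin m) :
    0 ≤ blockAbsSum N D i := Finset.sum_nonneg (fun _ _ => abs_nonneg _)

lemma aux_pos (hC0 : ∀ x, 0 ≤ C x) (hzero : ∀ x, C x = 0 ↔ x = 0) {s : Fin m → ℤ}
    (hs : SignVec s) {D : (Σ i : Fin m, Fin (N i)) → ℤ} (hD : D ≠ 0) :
    0 < Csgn C s (blockAbsSum N D) := by
  refine lt_of_le_of_ne (hC0 _) fun h => hD ?_
  have h2 := (hzero _).1 h.symm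
  funext j
  apply aux_blk_zero
  have h3 := congrFun h2 j.1
  rcases hs j.1 with h | h <;> simpa [h] using h3

lemma aux_zero_mem {s : Fin m → ℤ} (D : (Σ i : Fin m, Fin (N i)) → ℤ)
    (hD : inAbar D) (h0 : D ≠ 0) : (0 : (Σ i : Fin m, Fin (N i)) → ℝ) ∈ BsSet N C s := by
  have h1 : qDs N C s D ∈ BsSet N C s := subset_convexHull ℝ _ ⟨D, hD, h0, rfl⟩
  have h2 : qDs N C s (-D) ∈ BsSet N C s := by
    refine subset_convexHull ℝ _ ⟨-D, ?_, by simpa using h0, rfl⟩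
    intro j
    have := hD j
    simp only [Pi.neg_apply]
    omega
  have h3 : qDs N C s (-D) = - qDs N C s D := by
    have hb : blockAbsSum N (-D) = blockAbsSum N D := by
      funext i
      simp [blockAbsSum]
    funext j
    simp [qDs, hb, neg_div]
  rw [h3] at h2
  have := (convex_convexHull ℝ _) h1 h2 (a := 1/2) (b := 1/2) (by norm_num) (by norm_num)
    (by norm_num)
  change _ ∈ BsSet N C s at this
  simpa using this

lemma aux_diag (hC0 : ∀ x, 0 ≤ C x) (hzero : ∀ x, C x = 0 ↔ x = 0)
    (hmono : ∀ x y, PreOrdInt x y → C x ≤ C y) {s t : Fin m → ℤ} (hs : SignVec s)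
    (ht : SignVec t) (d : (Σ i : Fin m, Fin (N i)) → ℤ) (hd : inAbar d)
    (hst : ∀ j, d j ≠ 0 → s j.1 = t j.1) {x : (Σ i : Fin m, Fin (N i)) → ℝ}
    (hx : x ∈ BsSet N C s) : (fun j => (d j : ℝ) * x j) ∈ BsSet N C t := by
  let L : ((Σ i : Fin m, Fin (N i)) → ℝ) →ₗ[ℝ] ((Σ i : Fin m, Fin (N i)) → ℝ) :=
    { toFun := fun x j => (d j : ℝ) * x j
      map_add' := by intro x y; funext j; simp [mul_add]
      map_smul' := by intro c x; funext j; simp; ring }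
  have key : BsSet N C s ⊆ L ⁻¹' (BsSet N C t) := by
    refine convexHull_min ?_ ((convex_convexHull ℝ _).linear_preimage L)
    rintro _ ⟨D, hD, h0, rfl⟩
    have hz : (0 : (Σ i : Fin m, Fin (N i)) → ℝ) ∈ BsSet N C t := aux_zero_mem D hD h0
    change (fun j => (d j : ℝ) * qDs N C s D j) ∈ BsSet N C t
    have hp := aux_pos hC0 hzero hs h0
    by_cases hE : (fun j => d j * D j) = 0
    · convert hz using 1
      funext j
      have := congrFun hE j
      have h2 : (d j : ℝ) * D j = 0 := by exact_mod_cast this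
      simp only [qDs, Pi.zero_apply]
      rw [← mul_div_assoc, h2, zero_div]
    · set E : (Σ i : Fin m, Fin (N i)) → ℤ := fun j => d j * D j with hEdef
      have hEA : inAbar E := by
        intro j
        rcases hd j with h | h | h <;> rcases hD j with h' | h' | h' <;> simp [hEdef, h, h']
      have hq := aux_pos hC0 hzero ht hE
      have hle1 : ∀ i, blockAbsSum N E i ≤ blockAbsSum N D i := by
        intro i
        refine Finset.sum_le_sum fun k _ => ?_
        rcases hd ⟨i, k⟩ with h | h | h <;> simp [hEdef, h]
      have hle : Csgn C t (blockAbsSum N E) ≤ Csgn C s (blockAbsSum N D) := by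
        refine hmono _ _ fun i => ?_
        have a1 := aux_blk_nonneg E i
        have a2 := aux_blk_nonneg D i
        have a3 := hle1 i
        simp only [abs_of_nonneg a1, abs_of_nonneg a2]
        refine ⟨?_, ?_⟩
        · rcases hs i with h | h <;> rcases ht i with h' | h' <;>
            simp [h, h', abs_of_nonneg a1, abs_of_nonneg a2, a3]
        · by_cases hb : blockAbsSum N E i = 0
          · simp [hb]
          · have : ∃ k : Fin (N i), E ⟨i, k⟩ ≠ 0 := by
              by_contra! hcon
              exact hb (Finset.sum_eq_zero fun k _ => by simp [hcon k])
            obtain ⟨k, hk⟩ := this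
            have hh : s i = t i := hst ⟨i, k⟩ (fun h => hk (by simp [hEdef, h]))
            rw [hh]
            have : t i * t i = 1 := by rcases ht i with h | h <;> simp [h]
            have e : t i * blockAbsSum N E i * (t i * blockAbsSum N D i)
              = (t i * t i) * (blockAbsSum N E i * blockAbsSum N D i) := by ring
            rw [e, this, one_mul]
            exact mul_nonneg a1 a2
      have hmem : qDs N C t E ∈ BsSet N C t := subset_convexHull ℝ _ ⟨E, hEA, hE, rfl⟩
      have := (convex_convexHull ℝ _).smul_mem_of_zero_mem hz hmem
        (t := Csgn C t (blockAbsSum N E) / Csgn C s (blockAbsSum N D))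
        ⟨by positivity, (div_le_one hp).2 hle⟩
      change _ ∈ BsSet N C t at this
      convert this using 1
      funext j
      have hEj : (E j : ℝ) = d j * D j := by simp [hEdef]
      simp only [qDs, Pi.smul_apply, smul_eq_mul, hEj]
      clear_value E
      field_simp
  exact key hx

lemma aux_solid {ι : Type*} [Fintype ι] [DecidableEq ι] {S : Set (ι → ℝ)} (hS : Convex ℝ S)
    (hf : ∀ x ∈ S, ∀ j, Function.update x j (- x j) ∈ S) {p q : ι → ℝ} (hq : q ∈ S)
    (h : ∀ j, |p j| ≤ |q j|) : p ∈ S := by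
  have hone : ∀ x ∈ S, ∀ j c, |c| ≤ |x j| → Function.update x j c ∈ S := by
    intro x hx j c hc
    by_cases h0 : x j = 0
    · have : c = x j := by
        rw [h0] at hc ⊢
        simpa using hc
      rw [this, Function.update_eq_self]
      exact hx
    · have hr : |c / x j| ≤ 1 := by
        rw [abs_div]
        exact (div_le_one (abs_pos.2 h0)).2 hc
      have hr2 := abs_le.1 hr
      have := hS hx (hf x hx j) (a := (1 + c / x j) / 2) (b := (1 - c / x j) / 2)
        (by linarith) (by linarith) (by ring)
      convert this using 1
      funext k
      by_cases hk : k = j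
      · subst hk
        simp
        field_simp
        ring
      · simp [hk]
        ring
  have : ∀ F : Finset ι, (fun j => if j ∈ F then p j else q j) ∈ S := by
    intro F
    induction F using Finset.induction_on with
    | empty => simpa using hq
    | insert a F ha ih =>
      convert hone _ ih a (p a) (by simpa [ha] using h a) using 1
      funext k
      by_cases hk : k = a
      · subst hk; simp
      · simp [hk]
  simpa using this Finset.univ

lemma aux_Bs_solid (hC0 : ∀ x, 0 ≤ C x) (hzero : ∀ x, C x = 0 ↔ x = 0)
    (hmono : ∀ x y, PreOrdInt x y → C x ≤ C y) {s : Fin m → ℤ} (hs : SignVec s)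
    {p q : (Σ i : Fin m, Fin (N i)) → ℝ} (hq : q ∈ BsSet N C s)
    (h : ∀ j, |p j| ≤ |q j|) : p ∈ BsSet N C s := by
  refine aux_solid (convex_convexHull ℝ _) ?_ hq h
  intro x hx j
  have := aux_diag hC0 hzero hmono hs hs (fun k => if k = j then -1 else 1)
    (by intro k; by_cases hk : k = j <;> simp [hk]) (fun _ _ => rfl) hx
  change _ ∈ BsSet N C s
  convert this using 1
  funext k
  by_cases hk : k = j
  · subst hk; simp
  · simp [hk]

lemma aux_Hs_closed (s : Fin m → ℤ) : IsClosed (HsSet N s) := by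
  have : HsSet N s = ⋂ j, {p | 0 ≤ tauS N s j * p j} := by ext; simp [HsSet]
  rw [this]
  exact isClosed_iInter fun j => isClosed_le continuous_const (by fun_prop)

lemma aux_As_compact (s : Fin m → ℤ) : IsCompact (AsSet N C s) := by
  refine IsCompact.inter_left ?_ (aux_Hs_closed s)
  refine Set.Finite.isCompact_convexHull (𝕜 := ℝ) ?_
  have hfin : Set.Finite {D : (Σ i : Fin m, Fin (N i)) → ℤ | inAbar D} := by
    refine (Set.Finite.pi' (t := fun _ => ({-1, 0, 1} : Set ℤ)) fun _ => Set.toFinite _).subset ?_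
    intro D hD j
    simpa using hD j
  refine (hfin.image (qDs N C s)).subset ?_
  rintro _ ⟨D, hD, -, rfl⟩
  exact ⟨D, hD, rfl⟩

lemma aux_Csharp_closed (s : Fin m → ℤ) : IsClosed (Csharp N C s) := by
  have hZ : IsClosed {z : (Σ i : Fin m, Fin (N i)) → ℝ | ∀ j, tauS N s j * z j ≤ 0} := by
    rw [Set.ofPred_forall]
    exact isClosed_iInter fun j => isClosed_le (by fun_prop) continuous_const
  have : Csharp N C s = Set.image2 (· + ·) (AsSet N C s)
      {z : (Σ i : Fin m, Fin (N i)) → ℝ | ∀ j, tauS N s j * z j ≤ 0} := by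
    ext p
    constructor
    · rintro ⟨q, hq, h⟩
      exact ⟨q, hq, p - q, h, by simp⟩
    · rintro ⟨q, hq, z, hz, rfl⟩
      exact ⟨q, hq, fun j => by simpa using hz j⟩
  rw [this]
  exact hZ.add_left_of_isCompact (aux_As_compact s)

lemma aux_Csharp_convex (s : Fin m → ℤ) : Convex ℝ (Csharp N C s) := by
  rintro x ⟨q, ⟨hq1, hq2⟩, h⟩ y ⟨r, ⟨hr1, hr2⟩, h'⟩ a b ha hb hab
  refine ⟨a • q + b • r, ⟨fun j => ?_, convex_convexHull ℝ _ hq2 hr2 ha hb hab⟩, fun j => ?_⟩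
  · have h1 := mul_nonneg ha (hq1 j)
    have h2 := mul_nonneg hb (hr1 j)
    simp only [Pi.add_apply, Pi.smul_apply, smul_eq_mul]
    nlinarith
  · have h1 := mul_nonneg ha (neg_nonneg.2 (h j))
    have h2 := mul_nonneg hb (neg_nonneg.2 (h' j))
    simp only [Pi.add_apply, Pi.smul_apply, smul_eq_mul]
    nlinarith

lemma aux_neg (hC0 : ∀ x, 0 ≤ C x) (heven : ∀ x, C (-x) = C x)
    (hzero : ∀ x, C x = 0 ↔ x = 0)
    (hmono : ∀ x y, PreOrdInt x y → C x ≤ C y) {s : Fin m → ℤ} (hs : SignVec s)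
    {q : (Σ i : Fin m, Fin (N i)) → ℝ} (hq : q ∈ AsSet N C (-s)) : -q ∈ AsSet N C s := by
  refine ⟨fun j => ?_, ?_⟩
  · have := hq.1 j
    simp only [tauS, Pi.neg_apply] at this ⊢
    push_cast at this
    linarith
  · have hB : BsSet N C (-s) = BsSet N C s := by
      have : ∀ x, Csgn C (-s) x = Csgn C s x := by
        intro x
        unfold Csgn
        rw [← heven]
        congr 1
        funext i
        simp
      have h2 : ∀ D, qDs N C (-s) D = qDs N C s D := by
        intro D
        funext j
        unfold qDs
        rw [this]
      simp only [BsSet, h2]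
    have h2 := hq.2
    rw [hB] at h2
    exact aux_Bs_solid hC0 hzero hmono hs h2 (fun j => by simp)

lemma aux_tau (s : Fin m → ℤ) (hs : SignVec s) (j : Σ i : Fin m, Fin (N i)) :
    tauS N s j = 1 ∨ tauS N s j = -1 := by
  rcases hs j.1 with h | h <;> simp [tauS, h]

lemma aux_nhds (hm : 1 ≤ m) (hN : ∀ i, 0 < N i) (hC0 : ∀ x, 0 ≤ C x)
    (hzero : ∀ x, C x = 0 ↔ x = 0) {s : Fin m → ℤ} (hs : SignVec s) :
    Csharp N C s ∈ nhds (0 : (Σ i : Fin m, Fin (N i)) → ℝ) := by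
  let D : (Σ i : Fin m, Fin (N i)) → ℤ := fun j => s j.1
  have hDA : inAbar D := by
    intro j
    rcases hs j.1 with h | h <;> simp [D, h]
  have hD0 : D ≠ 0 := by
    intro h
    have := congrFun h ⟨⟨0, hm⟩, ⟨0, hN _⟩⟩
    rcases hs ⟨0, hm⟩ with h | h <;> simp [D, h] at this
  have hp := aux_pos (N := N) hC0 hzero hs hD0
  set c := Csgn C s (blockAbsSum N D) with hc
  have hball : Metric.ball (0 : (Σ i : Fin m, Fin (N i)) → ℝ) (1 / c) ⊆ Csharp N C s := by
    intro p hpb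
    rw [mem_ball_zero_iff, pi_norm_lt_iff (by positivity)] at hpb
    have hval : ∀ j, qDs N C s D j = tauS N s j * (1 / c) := by
      intro j
      simp only [qDs, tauS, ← hc, D]
      ring
    have hic : 0 < 1 / c := by positivity
    refine ⟨qDs N C s D, ⟨fun j => ?_, subset_convexHull ℝ _ ⟨D, hDA, hD0, rfl⟩⟩, fun j => ?_⟩
    · rw [hval]
      rcases aux_tau s hs j with h | h <;> rw [h] <;> linarith
    · rw [hval]
      have := abs_lt.1 (hpb j)
      rcases aux_tau s hs j with h | h <;> rw [h] <;> linarith [this.1, this.2]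
  exact Filter.mem_of_superset (Metric.ball_mem_nhds _ (by positivity)) hball

end Helpers

/-- Let `C : ℤ^m → [0,∞)` satisfy (i), (ii), (iii'). Then
`K := ⋂_s C_s^♯` is a closed, bounded, convex set, symmetric with respect to the
origin, with nonempty interior; it is a monotone set, and `K ∩ H_s = A_s` for every
sign vector `s`. -/
theorem unit_ball_from_orthant_pieces {m : ℕ} (hm : 1 ≤ m)
    (C : (Fin m → ℤ) → ℝ)
    (hC0 : ∀ x, 0 ≤ C x)
    (heven : ∀ x, C (-x) = C x)
    (hzero : ∀ x, C x = 0 ↔ x = 0)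
    (hmono : ∀ x y, PreOrdInt x y → C x ≤ C y)
    (hsublin : ∃ nrmStar : (Fin m → ℝ) → ℝ, IsNorm nrmStar ∧
      (∀ x y : Fin m → ℝ, PreOrd x y → nrmStar x ≤ nrmStar y) ∧
      ∀ x x' : Fin m → ℤ, x ≠ 0 → x' ≠ 0 → PreOrdInt x' x →
        C x / nrmStar (fun i => (x i : ℝ)) ≤ C x' / nrmStar (fun i => (x' i : ℝ)))
    (N : Fin m → ℕ) (hN : ∀ i, 0 < N i) :
    IsClosed (KsetInter N C) ∧
    Bornology.IsBounded (KsetInter N C) ∧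
    Convex ℝ (KsetInter N C) ∧
    (∀ x ∈ KsetInter N C, -x ∈ KsetInter N C) ∧
    (interior (KsetInter N C)).Nonempty ∧
    (∀ x y : (Σ i : Fin m, Fin (N i)) → ℝ, PreOrd y x → x ∈ KsetInter N C →
      y ∈ KsetInter N C) ∧
    (∀ s : Fin m → ℤ, SignVec s → KsetInter N C ∩ HsSet N s = AsSet N C s) := by
  have hK : ∀ p, p ∈ KsetInter N C ↔ ∀ s, SignVec s → p ∈ Csharp N C s := by
    intro p; simp [KsetInter]
  refine ⟨?_, ?_, ?_, ?_, ?_, ?_, ?_⟩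
  · exact isClosed_iInter fun s => isClosed_iInter fun _ => aux_Csharp_closed s
  · obtain ⟨R, hR⟩ := (aux_As_compact (N := N) (C := C) (fun _ => 1)).isBounded.exists_norm_le
    obtain ⟨R', hR'⟩ := (aux_As_compact (N := N) (C := C) (fun _ => -1)).isBounded.exists_norm_le
    refine isBounded_iff_forall_norm_le.2 ⟨max R R', fun p hp => ?_⟩
    rw [hK] at hp
    obtain ⟨q, hq, h⟩ := hp (fun _ => 1) (fun _ => Or.inl rfl)
    obtain ⟨r, hr, h'⟩ := hp (fun _ => -1) (fun _ => Or.inr rfl)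
    have b1 := hR q hq
    have b2 := hR' r hr
    refine (pi_norm_le_iff_of_nonneg ((norm_nonneg q).trans (b1.trans (le_max_left _ _)))).2 fun j => ?_
    have c1 := abs_le.1 ((norm_le_pi_norm q j).trans b1)
    have c2 := abs_le.1 ((norm_le_pi_norm r j).trans b2)
    have d1 := h j
    have d2 := h' j
    simp only [tauS] at d1 d2
    push_cast at d1 d2
    rw [Real.norm_eq_abs, abs_le]
    constructor
    · linarith [le_max_right R R', c2.1]
    · linarith [le_max_left R R', c1.2]
  · exact convex_iInter fun s => convex_iInter fun _ => aux_Csharp_convex s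
  · intro x hx
    rw [hK] at hx ⊢
    intro s hs
    have hs' : SignVec (-s) := by
      intro i
      rcases hs i with h | h <;> simp [h]
    obtain ⟨q, hq, h⟩ := hx (-s) hs'
    refine ⟨-q, aux_neg hC0 heven hzero hmono hs hq, fun j => ?_⟩
    have := h j
    simp only [tauS, Pi.neg_apply] at this ⊢
    push_cast at this
    linarith
  · refine ⟨0, mem_interior_iff_mem_nhds.2 ?_⟩
    have hfin : Set.Finite {s : Fin m → ℤ | SignVec s} := by
      refine (Set.Finite.pi' (t := fun _ => ({1, -1} : Set ℤ)) fun _ => Set.toFinite _).subset ?_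
      intro s hs j
      simpa using hs j
    exact (Filter.biInter_mem hfin).2 fun s hs => aux_nhds hm hN hC0 hzero hs
  · intro x y hyx hx
    rw [hK] at hx ⊢
    intro s hs
    obtain ⟨q, hq, h⟩ := hx s hs
    refine ⟨q, hq, fun j => ?_⟩
    have h1 := h j
    have h2 := hq.1 j
    obtain ⟨h3, h4⟩ := hyx j
    rcases aux_tau s hs j with e | e <;> rw [e] at h1 h2 ⊢ <;>
      rcases abs_cases (x j) with ⟨e1, e2⟩ | ⟨e1, e2⟩ <;>
      rcases abs_cases (y j) with ⟨e3, e4⟩ | ⟨e3, e4⟩ <;> nlinarith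
  · intro s hs
    ext p
    constructor
    · rintro ⟨hp, hpH⟩
      rw [hK] at hp
      obtain ⟨q, hq, h⟩ := hp s hs
      refine ⟨hpH, aux_Bs_solid hC0 hzero hmono hs hq.2 fun j => ?_⟩
      have h1 := h j
      have h2 := hq.1 j
      have h3 := hpH j
      rcases aux_tau s hs j with e | e <;> rw [e] at h1 h2 h3
      · rw [abs_of_nonneg (by linarith), abs_of_nonneg (by linarith)]; linarith
      · rw [abs_of_nonpos (by linarith), abs_of_nonpos (by linarith)]; linarith
    · intro hp
      refine ⟨(hK p).2 fun t ht => ?_, hp.1⟩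
      refine ⟨fun j => ((if s j.1 = t j.1 then (1 : ℤ) else 0 : ℤ) : ℝ) * p j, ⟨fun j => ?_, ?_⟩,
        fun j => ?_⟩
      · have := hp.1 j
        by_cases h : s j.1 = t j.1
        · simpa [tauS, h] using this
        · simp [h]
      · refine aux_diag hC0 hzero hmono hs ht (fun j => if s j.1 = t j.1 then (1 : ℤ) else 0)
          ?_ ?_ hp.2
        · intro j
          by_cases h : s j.1 = t j.1 <;> simp [h]
        · intro j hj
          by_contra h
          simp [h] at hj
      · have h0 := hp.1 j
        by_cases h : s j.1 = t j.1
        · simp [h]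
        · simp only [h, if_false, tauS] at h0 ⊢
          rcases hs j.1 with e | e <;> rcases ht j.1 with e' | e' <;> rw [e] at h0 h <;>
            rw [e'] at h ⊢ <;> first | exact absurd rfl h | (push_cast at h0 ⊢; linarith)
end

section
/- Let C : ℤ → [0,∞) satisfy: (i) C is even and C(z) = 0 iff z = 0; (ii) C(z) ≤ C(w) whenever z ⪯ w. Then the following are equivalent: (a) the sublinearity condition (iii') holds, i.e. C(x)/x ≤ C(y)/y for all integers 1 ≤ y ≤ x; (b) for every positive integer N there exists a monotone norm ∥·∥ on ℝ^N satisfying the compatibility equation for C (with m = 1 and the single block {1, …, N}). -/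
/-- The single-material (`m = 1`) compatibility equation between a cost `C : ℤ → ℝ`
and a norm `nrm` on `ℝ^N`: for every `θ ∈ ℤ` with `|θ| ≤ N` and every subset
`K ⊆ {1, …, N}` with `#K = |θ|`, one has `C θ = ∥sign(θ) ∑_{j ∈ K} e_j∥`. -/
def CompatEq1 (N : ℕ) (C : ℤ → ℝ) (nrm : (Fin N → ℝ) → ℝ) : Prop :=
  ∀ θ : ℤ, θ.natAbs ≤ N →
    ∀ K : Finset (Fin N), K.card = θ.natAbs →
      C θ = nrm fun j => (θ.sign : ℝ) * (if j ∈ K then 1 else 0)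

theorem aux_card (n k : ℕ) (h : k ≤ n) :
    (Finset.univ.filter fun j : Fin n => j.val < k).card = k := by
  rw [Fin.card_filter_val_lt]; omega

theorem aux_back (C : ℤ → ℝ) (n k : ℕ) (hk : 1 ≤ k) (hkn : k ≤ n)
    (nrm : (Fin n → ℝ) → ℝ) (hn : IsNorm nrm) (hc : CompatEq1 n C nrm) :
    (k : ℝ) * C n ≤ n * C k := by
  have : NeZero n := ⟨by omega⟩
  obtain ⟨h0, hz, hadd, hsm⟩ := hn
  have hA : ∀ i : Fin n, (Finset.univ.filter fun j : Fin n => (j - i).val < k).card = k := by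
    intro i
    refine Eq.trans ?_ (aux_card n k hkn)
    refine Finset.card_equiv (Equiv.subRight i) ?_
    intro j; simp
  have hB : ∀ j : Fin n, (Finset.univ.filter fun i : Fin n => (j - i).val < k).card = k := by
    intro j
    refine Eq.trans ?_ (aux_card n k hkn)
    refine Finset.card_equiv (Equiv.subLeft j) ?_
    intro i; simp
  have hsk : (k : ℤ).sign = 1 := Int.sign_eq_one_of_pos (by omega)
  have hsn : (n : ℤ).sign = 1 := Int.sign_eq_one_of_pos (by omega)
  have h1 : C n = nrm (fun _ => 1) := by
    rw [hc n (by simp) Finset.univ (by simp)]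
    simp [hsn]
  have h2 : ∀ i : Fin n, nrm (fun j => if (j - i).val < k then (1 : ℝ) else 0) = C k := by
    intro i
    rw [hc k (by simpa using hkn) _ (by simpa using hA i)]
    congr 1; funext j
    simp [hsk]
  have h3 : ((k : ℝ) • (fun _ => 1 : Fin n → ℝ))
      = ∑ i : Fin n, (fun j => if (j - i).val < k then (1 : ℝ) else 0) := by
    funext j
    rw [Finset.sum_apply, Finset.sum_boole, hB j]
    simp
  have h4 := Finset.le_sum_of_subadditive nrm ((hz 0).2 rfl).le hadd Finset.univ
    (fun i : Fin n => (fun j : Fin n => if (j - i).val < k then (1 : ℝ) else 0))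
  rw [← h3, hsm, ← h1, Finset.sum_congr rfl (fun i _ => h2 i)] at h4
  simpa using h4

/-- the candidate norm -/
noncomputable def myN (C : ℤ → ℝ) (N : ℕ) (x : Fin N → ℝ) : ℝ :=
  (Finset.univ : Finset (Finset (Fin N))).sup' Finset.univ_nonempty
    fun S => C S.card / (S.card : ℝ) * ∑ j ∈ S, |x j|

theorem myN_le (C : ℤ → ℝ) (N : ℕ) (x : Fin N → ℝ) (S : Finset (Fin N)) :
    C S.card / (S.card : ℝ) * ∑ j ∈ S, |x j| ≤ myN C N x :=
  Finset.le_sup' (fun S : Finset (Fin N) => C S.card / (S.card : ℝ) * ∑ j ∈ S, |x j|)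
    (Finset.mem_univ S)

theorem myN_bd (C : ℤ → ℝ) (N : ℕ) (x : Fin N → ℝ) (b : ℝ)
    (h : ∀ S : Finset (Fin N), C S.card / (S.card : ℝ) * ∑ j ∈ S, |x j| ≤ b) : myN C N x ≤ b :=
  Finset.sup'_le _ _ fun S _ => h S

theorem myN_smul_le (C : ℤ → ℝ) (N : ℕ) (c : ℝ) (x : Fin N → ℝ) :
    myN C N (c • x) ≤ |c| * myN C N x := by
  refine myN_bd _ _ _ _ fun S => ?_
  have := mul_le_mul_of_nonneg_left (myN_le C N x S) (abs_nonneg c)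
  refine le_trans (le_of_eq ?_) this
  simp only [Pi.smul_apply, smul_eq_mul, abs_mul, ← Finset.mul_sum]
  ring

/-- Let `C : ℤ → [0,∞)` satisfy (i) even and vanishing exactly at
`0`, and (ii) monotone with respect to `⪯`. Then the sublinearity condition (iii'),
i.e. `C(x)/x ≤ C(y)/y` for all integers `1 ≤ y ≤ x`, holds if and only if for every
positive integer `N` there exists a monotone norm on `ℝ^N` satisfying the
compatibility equation for `C`. -/
theorem sublinear_iff_exists_compatible_monotone_norm
    (C : ℤ → ℝ)
    (hC0 : ∀ z, 0 ≤ C z)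
    (heven : ∀ z, C (-z) = C z)
    (hzero : ∀ z, C z = 0 ↔ z = 0)
    (hmono : ∀ z w : ℤ, |z| ≤ |w| → 0 ≤ z * w → C z ≤ C w) :
    (∀ x y : ℤ, 1 ≤ y → y ≤ x → C x / (x : ℝ) ≤ C y / (y : ℝ)) ↔
    (∀ N : ℕ, 0 < N → ∃ nrm : (Fin N → ℝ) → ℝ,
      IsNorm nrm ∧ (∀ x y, PreOrd x y → nrm x ≤ nrm y) ∧ CompatEq1 N C nrm) := by
  constructor
  · intro hs N hN
    have hq : ∀ S : Finset (Fin N), 0 ≤ C S.card / (S.card : ℝ) := fun S =>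
      div_nonneg (hC0 _) (Nat.cast_nonneg _)
    have hnn : ∀ x, 0 ≤ myN C N x := fun x => by
      simpa using myN_le C N x ∅
    refine ⟨myN C N, ⟨hnn, ?_, ?_, ?_⟩, ?_, ?_⟩
    · intro x
      constructor
      · intro h
        have h1 := myN_le C N x Finset.univ
        rw [h, Finset.card_univ, Fintype.card_fin] at h1
        have hp : 0 < C (N : ℤ) / (N : ℝ) := by
          refine div_pos (lt_of_le_of_ne (hC0 _) fun h => ?_) (by exact_mod_cast hN)
          have := (hzero _).1 h.symm
          omega
        have h2 : ∑ j, |x j| ≤ 0 := by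
          by_contra hcon
          push Not at hcon
          have := mul_pos hp hcon
          linarith
        funext j
        have h3 := Finset.single_le_sum (f := fun j => |x j|) (fun i _ => abs_nonneg (x i))
          (Finset.mem_univ j)
        exact abs_eq_zero.1 (le_antisymm (h3.trans h2) (abs_nonneg _))
      · rintro rfl
        refine le_antisymm (myN_bd _ _ _ _ fun S => ?_) (hnn _)
        simp
    · intro x y
      refine myN_bd _ _ _ _ fun S => ?_
      refine le_trans ?_ (add_le_add (myN_le C N x S) (myN_le C N y S))
      rw [← mul_add, ← Finset.sum_add_distrib]
      exact mul_le_mul_of_nonneg_left (Finset.sum_le_sum fun j _ => abs_add_le _ _) (hq S)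
    · intro c x
      refine le_antisymm (myN_smul_le C N c x) ?_
      by_cases hc : c = 0
      · subst hc; simpa using hnn _
      · have h := myN_smul_le C N c⁻¹ (c • x)
        rw [inv_smul_smul₀ hc, abs_inv] at h
        have h2 := mul_le_mul_of_nonneg_left h (abs_nonneg c)
        rwa [mul_inv_cancel_left₀ (abs_ne_zero.2 hc)] at h2
    · intro x y hxy
      refine myN_bd _ _ _ _ fun S => le_trans ?_ (myN_le C N y S)
      exact mul_le_mul_of_nonneg_left (Finset.sum_le_sum fun j _ => (hxy j).1) (hq S)
    · intro θ hθ K hK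
      have hCa : C θ = C (K.card : ℤ) := by
        rw [hK]
        rcases Int.natAbs_eq θ with h | h
        · rw [← h]
        · conv_lhs => rw [h]
          rw [heven]
      have hsum : ∀ S : Finset (Fin N),
          ∑ j ∈ S, |(θ.sign : ℝ) * (if j ∈ K then 1 else 0)| = ((S ∩ K).card : ℝ) := by
        intro S
        rw [← Finset.filter_mem_eq_inter, ← Finset.sum_boole]
        refine Finset.sum_congr rfl fun j _ => ?_
        by_cases hj : j ∈ K
        · have hθ0 : θ ≠ 0 := by
            rintro rfl
            have : K = ∅ := by simpa using hK
            simp [this] at hj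
          rcases lt_or_gt_of_ne hθ0 with h | h
          · simp [hj, Int.sign_eq_neg_one_of_neg h]
          · simp [hj, Int.sign_eq_one_of_pos h]
        · simp [hj]
      rw [hCa]
      refine le_antisymm ?_ (myN_bd _ _ _ _ fun S => ?_)
      · refine le_trans ?_ (myN_le C N _ K)
        rw [hsum, Finset.inter_self]
        by_cases h0 : K.card = 0
        · rw [h0]; simp [(hzero 0).2 rfl]
        · rw [div_mul_cancel₀ _ (by exact_mod_cast h0)]
      · rw [hsum]
        by_cases hS : S.card = 0
        · rw [hS]; simpa using hC0 _
        by_cases h0 : K.card = 0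
        · rw [Finset.card_eq_zero.1 h0]; simpa using hC0 _
        rcases le_total S.card K.card with h | h
        · have h1 : ((S ∩ K).card : ℝ) ≤ S.card := by
            exact_mod_cast Finset.card_le_card Finset.inter_subset_left
          refine (mul_le_mul_of_nonneg_left h1 (hq S)).trans ?_
          rw [div_mul_cancel₀ _ (by exact_mod_cast hS)]
          exact hmono _ _ (by simpa using h) (by positivity)
        · have h1 : ((S ∩ K).card : ℝ) ≤ K.card := by
            exact_mod_cast Finset.card_le_card Finset.inter_subset_right
          refine (mul_le_mul_of_nonneg_left h1 (hq S)).trans ?_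
          have h2 := hs S.card K.card (by omega) (by omega)
          have hKp : (0 : ℝ) < K.card := by exact_mod_cast Nat.pos_of_ne_zero h0
          have h3 := mul_le_mul_of_nonneg_right h2 hKp.le
          push_cast at h3
          rwa [div_mul_cancel₀ (C K.card) hKp.ne'] at h3
  · intro h x y hy hyx
    obtain ⟨n, rfl⟩ := Int.eq_ofNat_of_zero_le (show 0 ≤ x by omega)
    obtain ⟨k, rfl⟩ := Int.eq_ofNat_of_zero_le (show 0 ≤ y by omega)
    obtain ⟨nrm, hn, -, hc⟩ := h n (by omega)
    have h1 := aux_back C n k (by omega) (by omega) nrm hn hc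
    have hnp : (0 : ℝ) < n := by exact_mod_cast (show 0 < n by omega)
    have hkp : (0 : ℝ) < k := by exact_mod_cast (show 0 < k by omega)
    push_cast
    rw [div_le_div_iff₀ hnp hkp]
    linarith
end

section
/- Let N be a positive integer, C : ℤ → [0,∞), and let ∥·∥ be a norm on ℝ^N such that for every subset K ⊆ {1, …, N} one has ∥Σ_{k∈K} e_k∥ = C(#K), where (e_k) is the standard basis of ℝ^N. Then C(x)/x ≤ C(y)/y for all integers 1 ≤ y ≤ x ≤ N. -/
/-- Let `N` be a positive integer, `C : ℤ → [0,∞)`, and let `nrm`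
be a norm on `ℝ^N` such that for every subset `K ⊆ {1, …, N}` one has
`∥∑_{k ∈ K} e_k∥ = C(#K)`. Then `C(x)/x ≤ C(y)/y` for all integers
`1 ≤ y ≤ x ≤ N`. -/
theorem compatible_norm_implies_sublinear
    (N : ℕ) (hN : 0 < N)
    (C : ℤ → ℝ) (hC0 : ∀ z, 0 ≤ C z)
    (nrm : (Fin N → ℝ) → ℝ) (hnrm : IsNorm nrm)
    (hcompat : ∀ K : Finset (Fin N),
      nrm (fun j => if j ∈ K then (1 : ℝ) else 0) = C (K.card : ℤ)) :
    ∀ x y : ℤ, 1 ≤ y → y ≤ x → x ≤ (N : ℤ) → C x / (x : ℝ) ≤ C y / (y : ℝ) := by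
  obtain ⟨_, hz, hadd, hsmul⟩ := hnrm
  have hsum : ∀ (T : Finset (Fin N)) (g : Fin N → (Fin N → ℝ)),
      nrm (∑ k ∈ T, g k) ≤ ∑ k ∈ T, nrm (g k) := by
    intro T g
    induction T using Finset.induction_on with
    | empty => simp [(hz 0).2 rfl]
    | insert a T ha ih =>
      rw [Finset.sum_insert ha, Finset.sum_insert ha]
      exact (hadd _ _).trans (by linarith)
  have step : ∀ n : ℕ, n + 1 ≤ N → (n : ℝ) * C ((n : ℤ) + 1) ≤ ((n : ℝ) + 1) * C n := by
    intro n hn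
    obtain ⟨S, -, hS⟩ := Finset.exists_subset_card_eq
      (s := (Finset.univ : Finset (Fin N))) (n := n + 1) (by simpa using hn)
    have h1 := hsum S (fun k j => if j ∈ S.erase k then (1 : ℝ) else 0)
    have h2 : (∑ k ∈ S, (fun j => if j ∈ S.erase k then (1 : ℝ) else 0) : Fin N → ℝ)
        = (n : ℝ) • (fun j => if j ∈ S then (1 : ℝ) else 0) := by
      funext j
      rw [Finset.sum_apply]
      by_cases hj : j ∈ S
      · have : ∀ k ∈ S, (if j ∈ S.erase k then (1 : ℝ) else 0)
            = 1 - (if j = k then 1 else 0) := by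
          intro k hk
          by_cases h : j = k <;> simp [h, hj, hk]
        rw [Finset.sum_congr rfl this, Finset.sum_sub_distrib]
        simp [hj, hS]
      · simp [hj]
    have h3 : ∀ k ∈ S, nrm (fun j => if j ∈ S.erase k then (1 : ℝ) else 0) = C n := by
      intro k hk
      rw [hcompat, Finset.card_erase_of_mem hk, hS]
      simp
    rw [h2, hsmul, hcompat, Finset.sum_congr rfl h3, hS] at h1
    simpa [hS] using h1
  intro x y hy hxy
  induction x, hxy using Int.leInduction with
  | base => intro _; exact le_rfl
  | succ x hx ih =>
    intro hxN
    refine le_trans ?_ (ih (by omega))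
    lift x to ℕ using (by omega)
    have hx0 : (0 : ℝ) < x := by exact_mod_cast (by omega : 0 < x)
    have := step x (by omega)
    push_cast
    rw [div_le_div_iff₀ (by linarith) hx0]
    linarith
end

section
/- Let C : ℤ → [0,∞) satisfy: (i) C is even and C(z) = 0 iff z = 0; (ii) C(z) ≤ C(w) whenever z ⪯ w; and suppose C coincides on ℕ with a concave function f : [0,∞) → ℝ (with f(0) = C(0) = 0). Then for every positive integer N there exists a monotone norm ∥·∥ on ℝ^N satisfying the compatibility equation for C. -/
lemma sum_le_range_aux (w : ℕ → ℝ) (hw : Antitone w) (S : Finset ℕ) :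
    ∑ i ∈ S, w i ≤ ∑ i ∈ Finset.range S.card, w i := by
  induction S using Finset.induction_on_max with
  | empty => simp
  | insert a s ha ih =>
    have hn : a ∉ s := fun h => lt_irrefl _ (ha a h)
    have hc : s.card ≤ a := by
      have : s ⊆ Finset.range a := fun x hx => Finset.mem_range.2 (ha x hx)
      simpa using Finset.card_le_card this
    rw [Finset.sum_insert hn, Finset.card_insert_of_notMem hn, Finset.sum_range_succ]
    linarith [hw hc]

noncomputable def permNorm (N : ℕ) (w : ℕ → ℝ) (x : Fin N → ℝ) : ℝ :=
  Finset.univ.sup' Finset.univ_nonempty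
    (fun σ : Equiv.Perm (Fin N) => ∑ j, w (σ j) * |x j|)

lemma le_permNorm (N : ℕ) (w : ℕ → ℝ) (x : Fin N → ℝ) (σ : Equiv.Perm (Fin N)) :
    ∑ j, w (σ j) * |x j| ≤ permNorm N w x :=
  Finset.le_sup' (fun σ : Equiv.Perm (Fin N) => ∑ j, w (σ j) * |x j|) (Finset.mem_univ σ)

lemma permNorm_le (N : ℕ) (w : ℕ → ℝ) (x : Fin N → ℝ) (b : ℝ)
    (h : ∀ σ : Equiv.Perm (Fin N), ∑ j, w (σ j) * |x j| ≤ b) : permNorm N w x ≤ b :=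
  Finset.sup'_le _ _ fun σ _ => h σ

lemma permNorm_mono (N : ℕ) (w : ℕ → ℝ) (hw : ∀ i, 0 ≤ w i) (x y : Fin N → ℝ)
    (h : ∀ j, |x j| ≤ |y j|) : permNorm N w x ≤ permNorm N w y :=
  permNorm_le _ _ _ _ fun σ => le_trans
    (Finset.sum_le_sum fun j _ => mul_le_mul_of_nonneg_left (h j) (hw _)) (le_permNorm N w y σ)

lemma permNorm_nonneg (N : ℕ) (w : ℕ → ℝ) (hw : ∀ i, 0 ≤ w i) (x : Fin N → ℝ) :
    0 ≤ permNorm N w x :=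
  le_trans (Finset.sum_nonneg fun j _ => mul_nonneg (hw _) (abs_nonneg _)) (le_permNorm N w x 1)

lemma permNorm_zero (N : ℕ) (w : ℕ → ℝ) : permNorm N w 0 = 0 := by
  apply le_antisymm
  · exact permNorm_le _ _ _ _ fun σ => by simp
  · simpa using le_permNorm N w 0 1

lemma permNorm_smul_le (N : ℕ) (w : ℕ → ℝ) (c : ℝ) (x : Fin N → ℝ) :
    permNorm N w (c • x) ≤ |c| * permNorm N w x := by
  refine permNorm_le _ _ _ _ fun σ => ?_
  calc ∑ j, w (σ j) * |(c • x) j| = |c| * ∑ j, w (σ j) * |x j| := by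
        rw [Finset.mul_sum]
        refine Finset.sum_congr rfl fun j _ => ?_
        simp only [Pi.smul_apply, smul_eq_mul, abs_mul]
        ring
    _ ≤ _ := mul_le_mul_of_nonneg_left (le_permNorm N w x σ) (abs_nonneg _)

lemma permNorm_isNorm (N : ℕ) (hN : 0 < N) (w : ℕ → ℝ) (hw : ∀ i, 0 ≤ w i) (hw0 : 0 < w 0) :
    IsNorm (permNorm N w) := by
  refine ⟨permNorm_nonneg N w hw, fun x => ⟨fun h => ?_, fun h => h ▸ permNorm_zero N w⟩,
    fun x y => ?_, fun c x => ?_⟩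
  · funext j
    by_contra hj
    have h1 := le_permNorm N w x (Equiv.swap j ⟨0, hN⟩)
    have h2 := Finset.single_le_sum
      (f := fun i => w ((Equiv.swap j ⟨0, hN⟩ : Equiv.Perm (Fin N)) i) * |x i|)
      (fun i _ => mul_nonneg (hw _) (abs_nonneg _)) (Finset.mem_univ j)
    simp only [Equiv.swap_apply_left] at h2
    have h3 : 0 < w 0 * |x j| := mul_pos hw0 (abs_pos.2 hj)
    linarith
  · refine permNorm_le _ _ _ _ fun σ => ?_
    refine le_trans ?_ (add_le_add (le_permNorm N w x σ) (le_permNorm N w y σ))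
    rw [← Finset.sum_add_distrib]
    refine Finset.sum_le_sum fun j _ => ?_
    rw [← mul_add]
    exact mul_le_mul_of_nonneg_left (abs_add_le _ _) (hw _)
  · apply le_antisymm (permNorm_smul_le N w c x)
    by_cases hc : c = 0
    · subst hc
      simp [permNorm_zero]
    · have h := permNorm_smul_le N w c⁻¹ (c • x)
      rw [smul_smul, inv_mul_cancel₀ hc, one_smul, abs_inv] at h
      have hp : 0 < |c| := abs_pos.2 hc
      calc |c| * permNorm N w x ≤ |c| * (|c|⁻¹ * permNorm N w (c • x)) :=
            mul_le_mul_of_nonneg_left h hp.le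
        _ = _ := by field_simp

lemma permNorm_ind (N : ℕ) (w : ℕ → ℝ) (hw : Antitone w) (K : Finset (Fin N))
    (x : Fin N → ℝ) (hx : ∀ j, |x j| = if j ∈ K then 1 else 0) :
    permNorm N w x = ∑ i ∈ Finset.range K.card, w i := by
  have key : ∀ σ : Equiv.Perm (Fin N), ∑ j, w (σ j) * |x j|
      = ∑ i ∈ K.map (σ.toEmbedding.trans Fin.valEmbedding), w i := by
    intro σ
    simp [hx, Finset.sum_map]
  apply le_antisymm
  · refine permNorm_le _ _ _ _ fun σ => ?_
    rw [key]
    refine (sum_le_range_aux w hw _).trans ?_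
    rw [Finset.card_map]
  · have hK : K.card ≤ N := by simpa using Finset.card_le_univ K
    have hc : Fintype.card {j // j ∈ K} = Fintype.card {j : Fin N // (j : ℕ) < K.card} := by
      rw [Fintype.card_coe, Fintype.card_subtype, Fin.card_filter_val_lt]
      omega
    let e := Fintype.equivOfCardEq hc
    refine le_trans (le_of_eq ?_) (le_permNorm N w x e.extendSubtype)
    rw [key]
    refine Finset.sum_congr ?_ fun _ _ => rfl
    symm
    apply Finset.eq_of_subset_of_card_le
    · intro i hi
      rw [Finset.mem_map] at hi
      obtain ⟨j, hj, rfl⟩ := hi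
      rw [Finset.mem_range]
      exact e.extendSubtype_mem j hj
    · simp

/-- Let `C : ℤ → [0,∞)` satisfy (i) even and vanishing exactly at
`0`, (ii) monotone with respect to `⪯`, and suppose `C` coincides on `ℕ` with a
concave function `f : [0,∞) → ℝ` with `f 0 = C 0 = 0`. Then for every positive
integer `N` there exists a monotone norm on `ℝ^N` satisfying the compatibility
equation for `C`. -/
theorem concave_cost_has_compatible_monotone_norm
    (C : ℤ → ℝ)
    (hC0 : ∀ z, 0 ≤ C z)
    (heven : ∀ z, C (-z) = C z)
    (hzero : ∀ z, C z = 0 ↔ z = 0)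
    (hmono : ∀ z w : ℤ, |z| ≤ |w| → 0 ≤ z * w → C z ≤ C w)
    (f : ℝ → ℝ)
    (hconc : ConcaveOn ℝ (Set.Ici 0) f)
    (hf0 : f 0 = 0)
    (hagree : ∀ n : ℕ, C (n : ℤ) = f (n : ℝ)) :
    ∀ N : ℕ, 0 < N → ∃ nrm : (Fin N → ℝ) → ℝ,
      IsNorm nrm ∧ (∀ x y, PreOrd x y → nrm x ≤ nrm y) ∧ CompatEq1 N C nrm := by
  intro N hN
  have hw : ∀ i : ℕ, 0 ≤ C ((i + 1 : ℕ) : ℤ) - C (i : ℤ) := fun i => by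
    have := hmono (i : ℤ) ((i + 1 : ℕ) : ℤ)
      (by rw [Nat.abs_cast, Nat.abs_cast]; push_cast; linarith) (by positivity)
    linarith
  have hanti : Antitone (fun i : ℕ => C ((i + 1 : ℕ) : ℤ) - C (i : ℤ)) := by
    refine antitone_nat_of_succ_le fun i => ?_
    rw [hagree, hagree, hagree]
    have h := hconc.2 (Set.mem_Ici.2 (Nat.cast_nonneg (α := ℝ) i))
      (Set.mem_Ici.2 (Nat.cast_nonneg (α := ℝ) (i + 1 + 1)))
      (show (0 : ℝ) ≤ 1 / 2 by norm_num) (show (0 : ℝ) ≤ 1 / 2 by norm_num) (by norm_num)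
    have he : (1 / 2 : ℝ) • (i : ℝ) + (1 / 2 : ℝ) • ((i + 1 + 1 : ℕ) : ℝ) = ((i + 1 : ℕ) : ℝ) := by
      simp only [smul_eq_mul]
      push_cast
      ring
    rw [he] at h
    simp only [smul_eq_mul] at h
    linarith
  have hz : C 0 = 0 := (hzero 0).2 rfl
  refine ⟨permNorm N (fun i : ℕ => C ((i + 1 : ℕ) : ℤ) - C (i : ℤ)),
    permNorm_isNorm N hN _ hw ?_, fun x y h => permNorm_mono N _ hw x y fun j => (h j).1, ?_⟩
  · refine lt_of_le_of_ne (hw 0) fun h => ?_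
    have : C 1 = 0 := by simpa [hz] using h.symm
    exact one_ne_zero ((hzero 1).1 this)
  · intro θ hθ K hK
    rw [permNorm_ind N _ hanti K, Finset.sum_range_sub (fun i : ℕ => C (i : ℤ)), hK]
    · rcases Int.natAbs_eq θ with h | h
      · simp only [Nat.cast_zero, hz, sub_zero]
        rw [← h]
      · simp only [Nat.cast_zero, hz, sub_zero]
        rw [← heven]
        congr 1
        omega
    · intro j
      by_cases hj : j ∈ K
      · have h0 : θ ≠ 0 := by
          rintro rfl
          simp at hK
          simp [hK] at hj
        rcases lt_or_gt_of_ne h0 with h | h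
        · simp [hj, Int.sign_eq_neg_one_of_neg h]
        · simp [hj, Int.sign_eq_one_of_pos h]
      · simp [hj]
end

section
/- Let |·|⋆ be a monotone norm on ℝ^m, let N_1, …, N_m be positive integers with N := N_1 + … + N_m, and for each i = 1, …, m let C_i : ℤ → [0,∞) be a cost and ∥·∥^i a monotone norm on ℝ^{N_i} satisfying the single-material compatibility equation for C_i. Define C : ℤ^m → [0,∞) by C(z_1, …, z_m) := |(C_1(z_1), …, C_m(z_m))|⋆, and define ∥·∥ on ℝ^N ≅ ℝ^{N_1} × … × ℝ^{N_m} by ∥x∥ := |(∥x^{(1)}∥^1, …, ∥x^{(m)}∥^m)|⋆, where x = (x^{(1)}, …, x^{(m)}) is the block decomposition. Then ∥·∥ is a monotone norm on ℝ^N and it satisfies the compatibility equation for C (with blocks B_1, …, B_m of sizes N_1, …, N_m). -/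
/-- Composite multi-material costs: if `|·|⋆` is a monotone norm
on `ℝ^m` and, for each `i`, `C_i : ℤ → [0,∞)` is a cost with a monotone norm
`∥·∥^i` on `ℝ^{N_i}` satisfying the single-material compatibility equation, then
`C(z) := |(C_1(z_1), …, C_m(z_m))|⋆` and
`∥x∥ := |(∥x^{(1)}∥^1, …, ∥x^{(m)}∥^m)|⋆` (block decomposition) define a monotone
norm on `ℝ^N` satisfying the multi-material compatibility equation for `C`. -/
theorem composite_cost_compatible_norm {m : ℕ}
    (nrmStar : (Fin m → ℝ) → ℝ)
    (hstar : IsNorm nrmStar)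
    (hstarMono : ∀ x y : Fin m → ℝ, PreOrd x y → nrmStar x ≤ nrmStar y)
    (N : Fin m → ℕ) (hN : ∀ i, 0 < N i)
    (Ci : (i : Fin m) → ℤ → ℝ) (hCi0 : ∀ i z, 0 ≤ Ci i z)
    (nrmi : (i : Fin m) → (Fin (N i) → ℝ) → ℝ)
    (hnrmi : ∀ i, IsNorm (nrmi i))
    (hnrmiMono : ∀ i, ∀ x y : Fin (N i) → ℝ, PreOrd x y → nrmi i x ≤ nrmi i y)
    (hcompat : ∀ i, CompatEq1 (N i) (Ci i) (nrmi i))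
    (C : (Fin m → ℤ) → ℝ)
    (hC : C = fun z => nrmStar fun i => Ci i (z i))
    (nrm : ((Σ i : Fin m, Fin (N i)) → ℝ) → ℝ)
    (hnrm : nrm = fun x => nrmStar fun i => nrmi i fun k => x ⟨i, k⟩) :
    IsNorm nrm ∧ (∀ x y, PreOrd x y → nrm x ≤ nrm y) ∧ CompatEq m N C nrm := by
  subst hC hnrm
  obtain ⟨h0, hz, hadd, hsm⟩ := hstar
  have mono : ∀ a b : Fin m → ℝ, (∀ i, 0 ≤ a i) → (∀ i, a i ≤ b i) → nrmStar a ≤ nrmStar b := by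
    intro a b ha hab
    apply hstarMono
    intro i
    have hb := (ha i).trans (hab i)
    rw [abs_of_nonneg (ha i), abs_of_nonneg hb]
    exact ⟨hab i, mul_nonneg (ha i) hb⟩
  refine ⟨⟨fun x => h0 _, ?_, ?_, ?_⟩, ?_, ?_⟩
  · intro x
    simp only [hz]
    constructor
    · intro h
      funext ⟨i, k⟩
      have h1 := ((hnrmi i).2.1 _).1 (congrFun h i)
      exact congrFun h1 k
    · intro h
      funext i
      apply ((hnrmi i).2.1 _).2
      funext k
      rw [h]
      rfl
  · intro x y
    refine le_trans (mono _ ((fun i => nrmi i fun k => x ⟨i, k⟩) + (fun i => nrmi i fun k => y ⟨i, k⟩)) (fun i => (hnrmi i).1 _) ?_) (hadd _ _)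
    intro i
    exact (hnrmi i).2.2.1 (fun k => x ⟨i, k⟩) (fun k => y ⟨i, k⟩)
  · intro c x
    have h := hsm |c| (fun i => nrmi i fun k => x ⟨i, k⟩)
    rw [abs_abs] at h
    refine Eq.trans ?_ h
    refine congrArg nrmStar ?_
    funext i
    exact (hnrmi i).2.2.2 c (fun k => x ⟨i, k⟩)
  · intro x y hxy
    exact mono _ _ (fun i => (hnrmi i).1 _) (fun i => hnrmiMono i _ _ (fun k => hxy ⟨i, k⟩))
  · intro θ hθ K hK
    refine congrArg nrmStar ?_
    funext i
    exact hcompat i (θ i) (hθ i) (K i) (hK i)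
end

section
/- Fix 0 < α ≤ 1 and set p := 1/α. Let m ≥ 1 and define the mailing cost C : ℤ^m → [0,∞) by C(z_1, …, z_m) := (Σ_{i: z_i ≥ 0} z_i)^α + (Σ_{i: z_i < 0} |z_i|)^α. Fix positive integers N_1, …, N_m with N := N_1 + … + N_m, and define ∥x∥ := ∥x_+∥_{ℓ^p} + ∥x_-∥_{ℓ^p} on ℝ^N, where x_+ (resp. x_-) is obtained from x by setting all negative (resp. positive) coordinates equal to zero. Then ∥·∥ is a monotone norm on ℝ^N and it satisfies the compatibility equation for C. -/
theorem lpn_mono {ι : Type*} [Fintype ι] {p : ℝ} (hp : 1 ≤ p) (f g : ι → ℝ)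
    (h : ∀ j, |f j| ≤ |g j|) : (∑ j, |f j| ^ p) ^ (1 / p) ≤ (∑ j, |g j| ^ p) ^ (1 / p) := by
  have h0 : 0 ≤ p := by linarith
  refine Real.rpow_le_rpow (Finset.sum_nonneg fun j _ => by positivity) ?_ (by positivity)
  exact Finset.sum_le_sum fun j _ => Real.rpow_le_rpow (abs_nonneg _) (h j) h0

theorem lpn_smul {ι : Type*} [Fintype ι] {p : ℝ} (hp : 1 ≤ p) (c : ℝ) (f : ι → ℝ) :
    (∑ j, |c * f j| ^ p) ^ (1 / p) = |c| * (∑ j, |f j| ^ p) ^ (1 / p) := by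
  have h0 : p ≠ 0 := by linarith
  have h1 : ∀ j, |c * f j| ^ p = |c| ^ p * |f j| ^ p := fun j => by
    rw [abs_mul, Real.mul_rpow (abs_nonneg _) (abs_nonneg _)]
  simp_rw [h1]
  rw [← Finset.mul_sum, Real.mul_rpow (by positivity)
    (Finset.sum_nonneg fun j _ => by positivity), ← Real.rpow_mul (abs_nonneg _),
    mul_one_div_cancel h0, Real.rpow_one]

theorem lpn_nonneg {ι : Type*} [Fintype ι] (p : ℝ) (f : ι → ℝ) :
    0 ≤ (∑ j, |f j| ^ p) ^ (1 / p) :=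
  Real.rpow_nonneg (Finset.sum_nonneg fun j _ => by positivity) _

theorem lpn_zero {ι : Type*} [Fintype ι] {p : ℝ} (hp : 1 ≤ p) (f : ι → ℝ)
    (h : (∑ j, |f j| ^ p) ^ (1 / p) = 0) (j : ι) : f j = 0 := by
  have h0 : p ≠ 0 := by linarith
  have hn : ∀ j ∈ Finset.univ, 0 ≤ |f j| ^ p := fun j _ => by positivity
  rw [Real.rpow_eq_zero (Finset.sum_nonneg hn) (by positivity),
    Finset.sum_eq_zero_iff_of_nonneg hn] at h
  have := h j (Finset.mem_univ _)
  rwa [Real.rpow_eq_zero (abs_nonneg _) h0, abs_eq_zero] at this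

/-- The mailing problem: fix `0 < α ≤ 1` and `p := 1/α`. The cost
`C(z) := (∑_{i : z_i ≥ 0} z_i)^α + (∑_{i : z_i < 0} |z_i|)^α` on `ℤ^m` and the norm
`∥x∥ := ∥x_+∥_{ℓ^p} + ∥x_-∥_{ℓ^p}` on `ℝ^N` (where `x_+`, resp. `x_-`, is obtained
from `x` by setting all negative, resp. positive, coordinates to zero) satisfy: `∥·∥`
is a monotone norm satisfying the compatibility equation for `C`. -/
theorem mailing_cost_compatible_norm
    (α : ℝ) (hα0 : 0 < α) (hα1 : α ≤ 1)
    (p : ℝ) (hp : p = 1 / α)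
    {m : ℕ} (hm : 1 ≤ m)
    (N : Fin m → ℕ) (hN : ∀ i, 0 < N i)
    (C : (Fin m → ℤ) → ℝ)
    (hC : C = fun z =>
      ((∑ i ∈ Finset.univ.filter (fun i => 0 ≤ z i), z i : ℤ) : ℝ) ^ α +
      ((∑ i ∈ Finset.univ.filter (fun i => z i < 0), |z i| : ℤ) : ℝ) ^ α)
    (nrm : ((Σ i : Fin m, Fin (N i)) → ℝ) → ℝ)
    (hnrm : nrm = fun x =>
      (∑ j, |max (x j) 0| ^ p) ^ (1 / p) + (∑ j, |min (x j) 0| ^ p) ^ (1 / p)) :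
    IsNorm nrm ∧ (∀ x y, PreOrd x y → nrm x ≤ nrm y) ∧ CompatEq m N C nrm := by
  have h1p : 1 ≤ p := by rw [hp, le_div_iff₀ hα0]; linarith
  have hp0 : p ≠ 0 := by linarith
  have hpα : 1 / p = α := by rw [hp]; simp
  have hmono : ∀ x y, PreOrd x y → nrm x ≤ nrm y := by
    intro x y h
    subst hnrm
    refine add_le_add (lpn_mono h1p (fun j => max (x j) 0) (fun j => max (y j) 0) fun j => ?_)
      (lpn_mono h1p (fun j => min (x j) 0) (fun j => min (y j) 0) fun j => ?_)
    all_goals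
      obtain ⟨h1, h2⟩ := h j
      rcases lt_trichotomy (x j) 0 with hx | hx | hx
      · have hy : y j ≤ 0 := by by_contra hy; push Not at hy; nlinarith
        rw [abs_of_neg hx, abs_of_nonpos hy] at h1
        simp [hx.le, hy, abs_of_nonpos]
        try linarith
      · simp [hx]
      · have hy : 0 ≤ y j := by by_contra hy; push Not at hy; nlinarith
        rw [abs_of_pos hx, abs_of_nonneg hy] at h1
        simp [hx.le, hy, abs_of_nonneg]
        try linarith
  refine ⟨⟨?_, ?_, ?_, ?_⟩, hmono, ?_⟩
  · intro x
    subst hnrm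
    exact add_nonneg (lpn_nonneg p fun j => max (x j) 0) (lpn_nonneg p fun j => min (x j) 0)
  · intro x
    subst hnrm
    constructor
    · intro h
      have a := lpn_nonneg p fun j => max (x j) 0
      have b := lpn_nonneg p fun j => min (x j) 0
      simp only at h a b
      have ha := lpn_zero h1p (fun j => max (x j) 0) (by linarith)
      have hb := lpn_zero h1p (fun j => min (x j) 0) (by linarith)
      funext j
      have := max_add_min (x j) 0
      have ha := ha j
      have hb := hb j
      simp only [Pi.zero_apply]
      linarith
    · rintro rfl
      have : p⁻¹ ≠ 0 := inv_ne_zero hp0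
      simp [Real.zero_rpow hp0, Real.zero_rpow this]
  · intro x y
    subst hnrm
    have e1 := Real.Lp_add_le Finset.univ (fun j => max (x j) 0) (fun j => max (y j) 0) h1p
    have e2 := Real.Lp_add_le Finset.univ (fun j => min (x j) 0) (fun j => min (y j) 0) h1p
    have e3 := lpn_mono h1p (fun j => max ((x + y) j) 0)
      (fun j => max (x j) 0 + max (y j) 0) fun j => by
        simp only [Pi.add_apply]
        apply abs_le_abs_of_nonneg (le_max_right _ _)
        exact max_le (add_le_add (le_max_left _ _) (le_max_left _ _))
          (add_nonneg (le_max_right _ _) (le_max_right _ _))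
    have e4 := lpn_mono h1p (fun j => min ((x + y) j) 0)
      (fun j => min (x j) 0 + min (y j) 0) fun j => by
        simp only [Pi.add_apply]
        apply abs_le_abs_of_nonpos (min_le_right _ _)
        exact le_min (add_le_add (min_le_left _ _) (min_le_left _ _))
          (add_nonpos (min_le_right _ _) (min_le_right _ _))
    simp only at e1 e2 e3 e4 ⊢
    linarith
  · intro c x
    subst hnrm
    have e1 := lpn_smul h1p c (fun j => max (x j) 0)
    have e2 := lpn_smul h1p c (fun j => min (x j) 0)
    simp only [Pi.smul_apply, smul_eq_mul] at e1 e2 ⊢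
    rw [mul_add, ← e1, ← e2]
    rcases le_total 0 c with hc | hc
    · simp only [mul_max_of_nonneg _ _ hc, mul_min_of_nonneg _ _ hc, mul_zero]
    · have k1 : ∀ j, c * max (x j) 0 = min (c * x j) 0 := fun j => by
        rcases le_total 0 (x j) with h | h
        · rw [max_eq_left h, min_eq_left (mul_nonpos_of_nonpos_of_nonneg hc h)]
        · rw [max_eq_right h, min_eq_right (mul_nonneg_of_nonpos_of_nonpos hc h), mul_zero]
      have k2 : ∀ j, c * min (x j) 0 = max (c * x j) 0 := fun j => by
        rcases le_total 0 (x j) with h | h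
        · rw [min_eq_right h, max_eq_right (mul_nonpos_of_nonpos_of_nonneg hc h), mul_zero]
        · rw [min_eq_left h, max_eq_left (mul_nonneg_of_nonpos_of_nonpos hc h)]
      simp only [k1, k2]
      rw [add_comm]
  · intro θ _ K hK
    subst hnrm hC
    simp only [hpα]
    congr 2
    all_goals
      rw [Fintype.sum_sigma, Finset.sum_filter, Int.cast_sum]
      refine Finset.sum_congr rfl fun i _ => ?_
      have hc : ((K i).card : ℝ) = |(θ i : ℝ)| := by
        rw [hK i, Nat.cast_natAbs, Int.cast_abs]
      simp only
      rcases lt_trichotomy (θ i) 0 with h | h | h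
      · have h' : (θ i : ℝ) < 0 := by exact_mod_cast h
        rw [abs_of_neg h'] at hc
        simp [Int.sign_eq_neg_one_of_neg h, h, h.not_ge, apply_ite (fun t : ℝ => |max t 0| ^ p),
          apply_ite (fun t : ℝ => |min t 0| ^ p), Real.zero_rpow hp0, abs_of_neg h', hc]
      · simp [h, Real.zero_rpow hp0]
      · have h' : (0:ℝ) < (θ i : ℝ) := by exact_mod_cast h
        rw [abs_of_pos h'] at hc
        simp [Int.sign_eq_one_of_pos h, h.le, h.not_gt, apply_ite, ite_pow, Real.zero_rpow hp0,
          Finset.sum_ite, hc, Finset.filter_mem_eq_inter]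
end

section
/- Let K ≥ 1, and for k = 1, …, K let λ_k > 0 and 0 < α_k ≤ 1; set p_k := 1/α_k. Define C : ℤ → [0,∞) by C(0) := 0 and C(z) := Σ_{k=1}^K λ_k |z|^{α_k} for z ≠ 0. Then: (a) C is even, C(z) = 0 iff z = 0, C(z) ≤ C(w) whenever z ⪯ w, and C(x)/x ≤ C(y)/y for all integers 1 ≤ y ≤ x (condition (iii')); and (b) for every positive integer N, the norm ∥x∥ := Σ_{k=1}^K λ_k ∥x∥_{ℓ^{p_k}} on ℝ^N is monotone and satisfies the single-material compatibility equation for C. -/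
/-- Linear combinations of Gilbert–Steiner costs: for `λ_k > 0`
and `0 < α_k ≤ 1`, `p_k := 1/α_k`, the cost `C(z) := ∑_k λ_k |z|^{α_k}` (`C(0) = 0`)
satisfies (a) the cost axioms (i), (ii), and the sublinearity condition (iii'); and
(b) for every positive integer `N`, the norm `∥x∥ := ∑_k λ_k ∥x∥_{ℓ^{p_k}}` on `ℝ^N`
is monotone and satisfies the single-material compatibility equation for `C`. -/
theorem linear_combination_cost_compatible_norm
    (K : ℕ) (hK : 1 ≤ K)
    (lam : Fin K → ℝ) (hlam : ∀ k, 0 < lam k)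
    (α : Fin K → ℝ) (hα0 : ∀ k, 0 < α k) (hα1 : ∀ k, α k ≤ 1)
    (p : Fin K → ℝ) (hp : ∀ k, p k = 1 / α k)
    (C : ℤ → ℝ)
    (hC : C = fun z : ℤ =>
      if z = 0 then 0 else ∑ k, lam k * |(z : ℝ)| ^ (α k)) :
    ((∀ z, C (-z) = C z) ∧
     (∀ z, C z = 0 ↔ z = 0) ∧
     (∀ z w : ℤ, |z| ≤ |w| → 0 ≤ z * w → C z ≤ C w) ∧
     (∀ x y : ℤ, 1 ≤ y → y ≤ x → C x / (x : ℝ) ≤ C y / (y : ℝ))) ∧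
    (∀ N : ℕ, 0 < N →
      IsNorm (fun x : Fin N → ℝ =>
        ∑ k, lam k * (∑ j, |x j| ^ (p k)) ^ (1 / p k)) ∧
      (∀ x y : Fin N → ℝ, PreOrd x y →
        (∑ k, lam k * (∑ j, |x j| ^ (p k)) ^ (1 / p k)) ≤
        (∑ k, lam k * (∑ j, |y j| ^ (p k)) ^ (1 / p k))) ∧
      CompatEq1 N C (fun x =>
        ∑ k, lam k * (∑ j, |x j| ^ (p k)) ^ (1 / p k))) := by
  have hpp : ∀ k, 0 < p k := fun k => by rw [hp]; exact one_div_pos.2 (hα0 k)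
  have hp1 : ∀ k, 1 ≤ p k := fun k => by
    rw [hp]; exact (one_le_div (hα0 k)).2 (hα1 k)
  have hpα : ∀ k, 1 / p k = α k := fun k => by rw [hp]; simp
  have hC' : ∀ z, C z = ∑ k, lam k * |(z : ℝ)| ^ (α k) := by
    intro z
    rw [hC]
    by_cases hz : z = 0
    · subst hz
      simp only [if_true, Int.cast_zero, abs_zero]
      symm
      apply Finset.sum_eq_zero
      intro k _
      rw [Real.zero_rpow (hα0 k).ne', mul_zero]
    · simp [hz]
  haveI : Nonempty (Fin K) := ⟨⟨0, hK⟩⟩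
  refine ⟨⟨?_, ?_, ?_, ?_⟩, ?_⟩
  · intro z
    simp [hC']
  · intro z
    constructor
    · intro h
      by_contra hz
      have hz' : (0 : ℝ) < |(z : ℝ)| := abs_pos.2 (by exact_mod_cast hz)
      rw [hC'] at h
      have : 0 < ∑ k, lam k * |(z : ℝ)| ^ (α k) :=
        Finset.sum_pos (fun k _ => mul_pos (hlam k) (Real.rpow_pos_of_pos hz' _))
          Finset.univ_nonempty
      exact this.ne' h
    · rintro rfl
      simp [hC]
  · intro z w h _
    rw [hC', hC']
    have h' : |(z : ℝ)| ≤ |(w : ℝ)| := by exact_mod_cast h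
    exact Finset.sum_le_sum fun k _ => mul_le_mul_of_nonneg_left
      (Real.rpow_le_rpow (abs_nonneg _) h' (hα0 k).le) (hlam k).le
  · intro x y hy hyx
    have hy' : (0 : ℝ) < y := by exact_mod_cast hy
    have hyx' : (y : ℝ) ≤ x := by exact_mod_cast hyx
    have hx' : (0 : ℝ) < x := hy'.trans_le hyx'
    rw [hC', hC', Finset.sum_div, Finset.sum_div, abs_of_pos hx', abs_of_pos hy']
    refine Finset.sum_le_sum fun k _ => ?_
    rw [mul_div_assoc, mul_div_assoc, ← Real.rpow_sub_one hx'.ne', ← Real.rpow_sub_one hy'.ne']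
    exact mul_le_mul_of_nonneg_left
      (Real.rpow_le_rpow_of_nonpos hy' hyx' (by linarith [hα1 k])) (hlam k).le
  · intro N hN
    have hs : ∀ k (x : Fin N → ℝ), 0 ≤ ∑ j, |x j| ^ (p k) := fun k x =>
      Finset.sum_nonneg fun j _ => Real.rpow_nonneg (abs_nonneg _) _
    have ht : ∀ k (x : Fin N → ℝ), 0 ≤ lam k * (∑ j, |x j| ^ (p k)) ^ (1 / p k) := fun k x =>
      mul_nonneg (hlam k).le (Real.rpow_nonneg (hs k x) _)
    refine ⟨⟨?_, ?_, ?_, ?_⟩, ?_, ?_⟩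
    · intro x
      exact Finset.sum_nonneg fun k _ => ht k x
    · intro x
      constructor
      · intro h
        have h1 := (Finset.sum_eq_zero_iff_of_nonneg (fun k _ => ht k x)).1 h ⟨0, hK⟩
          (Finset.mem_univ _)
        have h2 := (mul_eq_zero.1 h1).resolve_left (hlam _).ne'
        have h3 := (Real.rpow_eq_zero (hs _ x) (one_div_pos.2 (hpp _)).ne').1 h2
        funext j
        have h4 := (Finset.sum_eq_zero_iff_of_nonneg
          (fun j _ => Real.rpow_nonneg (abs_nonneg (x j)) _)).1 h3 j (Finset.mem_univ _)
        exact abs_eq_zero.1 ((Real.rpow_eq_zero (abs_nonneg _) (hpp _).ne').1 h4)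
      · rintro rfl
        refine Finset.sum_eq_zero fun k _ => ?_
        simp [Real.zero_rpow (hpp k).ne', Real.zero_rpow (inv_pos.2 (hpp k)).ne']
    · intro x y
      simp only [← Finset.sum_add_distrib, ← mul_add]
      refine Finset.sum_le_sum fun k _ => mul_le_mul_of_nonneg_left ?_ (hlam k).le
      exact Real.Lp_add_le Finset.univ x y (hp1 k)
    · intro c x
      simp only [Finset.mul_sum]
      refine Finset.sum_congr rfl fun k _ => ?_
      have : ∑ j, |(c • x) j| ^ (p k) = |c| ^ (p k) * ∑ j, |x j| ^ (p k) := by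
        rw [Finset.mul_sum]
        refine Finset.sum_congr rfl fun j _ => ?_
        rw [Pi.smul_apply, smul_eq_mul, abs_mul, Real.mul_rpow (abs_nonneg _) (abs_nonneg _)]
      rw [this, Real.mul_rpow (Real.rpow_nonneg (abs_nonneg _) _) (hs k x),
        ← Real.rpow_mul (abs_nonneg _), mul_one_div_cancel (hpp k).ne', Real.rpow_one]
      ring
    · intro x y h
      refine Finset.sum_le_sum fun k _ => mul_le_mul_of_nonneg_left ?_ (hlam k).le
      refine Real.rpow_le_rpow (hs k x) ?_ (one_div_pos.2 (hpp k)).le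
      exact Finset.sum_le_sum fun j _ => Real.rpow_le_rpow (abs_nonneg _) (h j).1 (hpp k).le
    · intro θ _ S hS
      rw [hC']
      refine Finset.sum_congr rfl fun k _ => ?_
      rw [hpα]
      congr 2
      have hθ : |(θ : ℝ)| = (S.card : ℝ) := by
        rw [hS, Nat.cast_natAbs, Int.cast_abs]
      rw [hθ]
      have : ∀ j, |(θ.sign : ℝ) * (if j ∈ S then 1 else 0)| ^ (p k)
          = if j ∈ S then (1 : ℝ) else 0 := by
        intro j
        by_cases hj : j ∈ S
        · have h0 : θ ≠ 0 := by
            rintro rfl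
            simp at hS
            simp [hS] at hj
          have : |(θ.sign : ℝ)| = 1 := by
            rcases lt_or_gt_of_ne h0 with h | h
            · simp [Int.sign_eq_neg_one_of_neg h]
            · simp [Int.sign_eq_one_of_pos h]
          simp [hj, this]
        · simp [hj, Real.zero_rpow (hpp k).ne']
      simp only [this]
      simp
end

section
/- Let ∥·∥ be the norm on ℝ² whose unit ball is the hexagon conv{(1,0), (0,1), (1,1), (−1,0), (0,−1), (−1,−1)}. Define the bilinear form L(τ, g) := (τ_1/2 + (√3/2)τ_2)·g_1 + (τ_1/2 − (√3/2)τ_2)·g_2 for τ, g ∈ ℝ². Then: (a) for every τ ∈ ℝ² with Euclidean norm |τ| = 1 and every g ∈ ℝ² with ∥g∥ ≤ 1, one has |L(τ, g)| ≤ 1; and (b) L((1/2, √3/2), (1,0)) = L((1/2, −√3/2), (0,1)) = L((1,0), (1,1)) = 1. -/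
/-- Calibration of the mailing problem with Steiner cost: let
`∥·∥` be the norm on `ℝ²` whose unit ball is the hexagon
`conv {(1,0), (0,1), (1,1), (-1,0), (0,-1), (-1,-1)}`, and let
`L(τ, g) := (τ₁/2 + (√3/2) τ₂) g₁ + (τ₁/2 − (√3/2) τ₂) g₂`. Then (a) `|L(τ, g)| ≤ 1`
whenever `τ` has Euclidean norm `1` and `∥g∥ ≤ 1`; and (b)
`L((1/2, √3/2), (1,0)) = L((1/2, −√3/2), (0,1)) = L((1,0), (1,1)) = 1`. -/
theorem steiner_calibration_hexagon
    (nrm : ℝ × ℝ → ℝ) (hnrm : IsNorm nrm)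
    (hball : {x | nrm x ≤ 1} = convexHull ℝ
      ({((1 : ℝ), (0 : ℝ)), ((0 : ℝ), (1 : ℝ)), ((1 : ℝ), (1 : ℝ)),
        ((-1 : ℝ), (0 : ℝ)), ((0 : ℝ), (-1 : ℝ)), ((-1 : ℝ), (-1 : ℝ))} :
        Set (ℝ × ℝ)))
    (L : ℝ × ℝ → ℝ × ℝ → ℝ)
    (hL : L = fun τ g =>
      (τ.1 / 2 + (Real.sqrt 3 / 2) * τ.2) * g.1 +
      (τ.1 / 2 - (Real.sqrt 3 / 2) * τ.2) * g.2) :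
    (∀ τ g : ℝ × ℝ, τ.1 ^ 2 + τ.2 ^ 2 = 1 → nrm g ≤ 1 → |L τ g| ≤ 1) ∧
    L (1 / 2, Real.sqrt 3 / 2) (1, 0) = 1 ∧
    L (1 / 2, -(Real.sqrt 3 / 2)) (0, 1) = 1 ∧
    L (1, 0) (1, 1) = 1 := by
  have h3 : Real.sqrt 3 * Real.sqrt 3 = 3 := Real.mul_self_sqrt (by norm_num)
  subst hL
  refine ⟨?_, ?_, ?_, ?_⟩
  · intro τ g hτ hg
    obtain ⟨x, y⟩ := τ
    simp only at hτ ⊢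
    have hs : (Real.sqrt 3) ^ 2 = 3 := by rw [sq, h3]
    have ha : |x / 2 + (Real.sqrt 3 / 2) * y| ≤ 1 := by
      apply abs_le_one_iff_mul_self_le_one.mpr
      have : 0 ≤ (Real.sqrt 3 / 2 * x - y / 2) ^ 2 := sq_nonneg _
      linear_combination this + hτ + ((x ^ 2 + y ^ 2) / 4) * hs
    have hb : |x / 2 - (Real.sqrt 3 / 2) * y| ≤ 1 := by
      apply abs_le_one_iff_mul_self_le_one.mpr
      have : 0 ≤ (Real.sqrt 3 / 2 * x + y / 2) ^ 2 := sq_nonneg _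
      linear_combination this + hτ + ((x ^ 2 + y ^ 2) / 4) * hs
    have hx : |x| ≤ 1 := by
      apply abs_le_one_iff_mul_self_le_one.mpr
      nlinarith [sq_nonneg y]
    generalize hA : x / 2 + (Real.sqrt 3 / 2) * y = a at *
    generalize hB : x / 2 - (Real.sqrt 3 / 2) * y = b at *
    have hab : x = a + b := by rw [← hA, ← hB]; ring
    rw [hab] at hx
    have hg' : g ∈ {x | nrm x ≤ 1} := hg
    rw [hball] at hg'
    have hconv : Convex ℝ {g : ℝ × ℝ | |a * g.1 + b * g.2| ≤ 1} := by
      intro u hu v hv s t hs ht hst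
      simp only [Set.mem_setOf_eq, abs_le, Prod.fst_add, Prod.snd_add, Prod.smul_fst,
        Prod.smul_snd, smul_eq_mul] at *
      constructor <;> nlinarith [mul_le_mul_of_nonneg_left hu.1 hs,
        mul_le_mul_of_nonneg_left hu.2 hs, mul_le_mul_of_nonneg_left hv.1 ht,
        mul_le_mul_of_nonneg_left hv.2 ht]
    refine convexHull_min ?_ hconv hg'
    rw [abs_le] at ha hb hx
    intro p hp
    simp only [Set.mem_insert_iff, Set.mem_singleton_iff] at hp
    rcases hp with rfl | rfl | rfl | rfl | rfl | rfl <;>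
      simp only [Set.mem_setOf_eq, abs_le] <;> constructor <;> linarith
  · simp only
    linarith
  · simp only
    linarith
  · simp only
    linarith
end
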